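/- Smallness of the potential on a dyadically long cone truncation: there exists an absolute constant C > 0 such that the following holds. Let u be a classical solution of ∂ₜₜu − Δu = −f(u) on an interval J = [t₁,t₂] with t₁ > 0, with energy E and a priori bound sup_{t∈J} ‖u(t,·)‖_{H̃²(ℝ³)} ≤ M. Let η > 0 satisfy η ≤ min(1, E^{1/18}), and assume [ t₁, t₁·( E·η^{−18} )^{4·E·η^{−18}} ] ⊆ J. Then there exists a subinterval J' = [t₁', t₂'] ⊆ J with t₂'/t₁' = E·η^{−18} and ‖u‖_{L^∞ₜL⁶ₓ(Γ₊(J'))} ≤ C·η. -/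

import Mathlib

open MeasureTheory Set

noncomputable section

abbrev Space : Type := EuclideanSpace ℝ (Fin 3)

/-- The loglog weight `g(u) = (log log (10 + u²))^c`. -/
def g (c u : ℝ) : ℝ := Real.log (Real.log (10 + u ^ 2)) ^ c

/-- The nonlinearity `f(u) = u⁵ g(u)`. -/
def f (c u : ℝ) : ℝ := u ^ 5 * g c u

/-- The potential `F(u) = ∫₀ᵘ f(v) dv`. -/
def Fpot (c u : ℝ) : ℝ := ∫ v in (0:ℝ)..u, f c v

/-- First time derivative `∂ₜ u`. -/
def dt1 (u : ℝ → Space → ℝ) (t : ℝ) (x : Space) : ℝ := deriv (fun s => u s x) t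

/-- Second time derivative `∂ₜₜ u`. -/
def dt2 (u : ℝ → Space → ℝ) (t : ℝ) (x : Space) : ℝ := deriv (fun s => dt1 u s x) t

/-- The spatial Laplacian. -/
def lap (h : Space → ℝ) (x : Space) : ℝ :=
  ∑ i : Fin 3, fderiv ℝ (fun y => fderiv ℝ h y (EuclideanSpace.single i 1)) x
    (EuclideanSpace.single i 1)

/-- A classical solution of `∂ₜₜ u - Δ u = -f(u)` on the time interval `J`:
infinitely differentiable, compactly supported in space for each fixed time,
and satisfying the equation. -/
structure IsClassicalSol (c : ℝ) (J : Set ℝ) (u : ℝ → Space → ℝ) : Prop where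
  smooth : ContDiffOn ℝ (⊤ : ℕ∞) (fun p : ℝ × Space => u p.1 p.2) (J ×ˢ (Set.univ : Set Space))
  compactSpt : ∀ t ∈ J, HasCompactSupport (u t)
  eqn : ∀ t ∈ J, ∀ x : Space, dt2 u t x - lap (u t) x = - f c (u t x)

/-- The conserved energy. -/
def energy (c : ℝ) (u : ℝ → Space → ℝ) (t : ℝ) : ℝ :=
  (1/2) * (∫ x : Space, (dt1 u t x) ^ 2)
    + (1/2) * (∫ x : Space, ‖gradient (u t) x‖ ^ 2)
    + ∫ x : Space, Fpot c (u t x)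

/-- Spatial `L^r` norm. -/
def LxNorm (r : ℝ) (h : Space → ℝ) : ℝ := (∫ x : Space, |h x| ^ r) ^ (1 / r)

/-- Mixed norm `L^q_t L^r_x (J × ℝ³)`. -/
def LtLxNorm (q r : ℝ) (J : Set ℝ) (u : ℝ → Space → ℝ) : ℝ :=
  (∫ t in J, (LxNorm r (u t)) ^ q) ^ (1 / q)

/-- The homogeneous `H̃² = Ḣ² ∩ Ḣ¹` norm. -/
def H2tildeNorm (h : Space → ℝ) : ℝ :=
  (∫ x : Space, ‖iteratedFDeriv ℝ 2 h x‖ ^ 2) ^ ((1:ℝ)/2)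
    + (∫ x : Space, ‖gradient h x‖ ^ 2) ^ ((1:ℝ)/2)

/-- The inhomogeneous `H¹` norm. -/
def H1Norm (h : Space → ℝ) : ℝ :=
  (∫ x : Space, (h x) ^ 2) ^ ((1:ℝ)/2)
    + (∫ x : Space, ‖gradient h x‖ ^ 2) ^ ((1:ℝ)/2)

/-- Spatial `L^r` norm restricted to the interior of the light cone at time `t`,
i.e. the norm of `h · 1_{|x| < t}`. -/
def LxConeNorm (r t : ℝ) (h : Space → ℝ) : ℝ :=
  (∫ x in Metric.ball (0:Space) t, |h x| ^ r) ^ (1 / r)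

/-- Mixed norm `L^q_t L^r_x (Γ₊(J))` on the truncated forward light cone. -/
def LtLxConeNorm (q r : ℝ) (J : Set ℝ) (u : ℝ → Space → ℝ) : ℝ :=
  (∫ t in J, (LxConeNorm r t (u t)) ^ q) ^ (1 / q)

/-- The local energy `e(t)` (integral over the ball `|x| ≤ t`). -/
def locEnergy (c : ℝ) (u : ℝ → Space → ℝ) (t : ℝ) : ℝ :=
  (1/2) * (∫ x in Metric.closedBall (0:Space) t, (dt1 u t x) ^ 2)
    + (1/2) * (∫ x in Metric.closedBall (0:Space) t, ‖gradient (u t) x‖ ^ 2)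
    + ∫ x in Metric.closedBall (0:Space) t, Fpot c (u t x)

/-- Time partial derivative on space-time. -/
def pd0 (h : ℝ × Space → ℝ) (p : ℝ × Space) : ℝ := fderiv ℝ h p (1, 0)

/-- Space partial derivative on space-time. -/
def pdi (i : Fin 3) (h : ℝ × Space → ℝ) (p : ℝ × Space) : ℝ :=
  fderiv ℝ h p (0, EuclideanSpace.single i 1)

lemma slice_t {h : ℝ × Space → ℝ} {t : ℝ} {x : Space} (hd : DifferentiableAt ℝ h (t, x)) :
    HasDerivAt (fun s => h (s, x)) (pd0 h (t, x)) t := by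
  have h1 : HasDerivAt (fun s : ℝ => (s, x)) ((1 : ℝ), (0 : Space)) t :=
    (hasDerivAt_id t).prodMk (hasDerivAt_const t x)
  exact hd.hasFDerivAt.comp_hasDerivAt t h1

lemma slice_x {h : ℝ × Space → ℝ} {t : ℝ} {x : Space} (hd : DifferentiableAt ℝ h (t, x)) :
    HasFDerivAt (fun y => h (t, y)) ((fderiv ℝ h (t, x)).comp (ContinuousLinearMap.inr ℝ ℝ Space)) x := by
  exact hd.hasFDerivAt.comp x (hasFDerivAt_prodMk_right t x)

lemma slice_x_fderiv {h : ℝ × Space → ℝ} {t : ℝ} {x : Space} (hd : DifferentiableAt ℝ h (t, x))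
    (i : Fin 3) :
    fderiv ℝ (fun y => h (t, y)) x (EuclideanSpace.single i 1) = pdi i h (t, x) := by
  rw [(slice_x hd).fderiv]; rfl

lemma slice_cont {I : Set ℝ} {h : ℝ × Space → ℝ} (hh : ContinuousOn h (I ×ˢ univ)) {t : ℝ}
    (ht : t ∈ I) : Continuous (fun x => h (t, x)) := by
  rw [← continuousOn_univ]
  exact hh.comp (by fun_prop) (fun x _ => ⟨ht, mem_univ _⟩)

lemma slice_int {I : Set ℝ} {h : ℝ × Space → ℝ} (hh : ContinuousOn h (I ×ˢ univ)) {t R : ℝ}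
    (ht : t ∈ I) (hs : ∀ p : ℝ × Space, p.1 ∈ I → R < ‖p.2‖ → h p = 0) :
    Integrable (fun x => h (t, x)) := by
  apply (slice_cont hh ht).integrable_of_hasCompactSupport
  apply HasCompactSupport.intro (isCompact_closedBall (0 : Space) R)
  intro x hx
  apply hs _ ht
  simpa using hx

lemma supp_deriv {I : Set ℝ} (hI : IsOpen I) {h : ℝ × Space → ℝ} {R : ℝ}
    (hs : ∀ p : ℝ × Space, p.1 ∈ I → R < ‖p.2‖ → h p = 0) :
    ∀ p : ℝ × Space, p.1 ∈ I → R < ‖p.2‖ → fderiv ℝ h p = 0 := by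
  intro p hp hR
  have : h =ᶠ[nhds p] (fun _ => 0) := by
    have h1 : ∀ᶠ q : ℝ × Space in nhds p, q.1 ∈ I :=
      (hI.preimage continuous_fst).mem_nhds hp
    have h2 : ∀ᶠ q : ℝ × Space in nhds p, R < ‖q.2‖ :=
      (isOpen_lt continuous_const (continuous_snd.norm)).mem_nhds hR
    filter_upwards [h1, h2] with q a b using hs q a b
  rw [this.fderiv_eq]; simp

lemma cd_fderiv {I : Set ℝ} (hI : IsOpen I) {h : ℝ × Space → ℝ}
    (hh : ContDiffOn ℝ 1 h (I ×ˢ univ)) (v : ℝ × Space) :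
    ContinuousOn (fun p => fderiv ℝ h p v) (I ×ˢ univ) := by
  have := hh.continuousOn_fderiv_of_isOpen (hI.prod isOpen_univ) le_rfl
  exact this.clm_apply continuousOn_const

lemma cd_diff {I : Set ℝ} (hI : IsOpen I) {h : ℝ × Space → ℝ} {n : WithTop ℕ∞} (hn : n ≠ 0)
    (hh : ContDiffOn ℝ n h (I ×ˢ univ)) {p : ℝ × Space} (hp : p.1 ∈ I) :
    DifferentiableAt ℝ h p :=
  (hh.differentiableOn hn).differentiableAt ((hI.prod isOpen_univ).mem_nhds ⟨hp, mem_univ _⟩)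

lemma leibniz {I : Set ℝ} (hI : IsOpen I) {R : ℝ} {H : ℝ × Space → ℝ}
    (hH : ContDiffOn ℝ 1 H (I ×ˢ univ))
    (sH : ∀ p : ℝ × Space, p.1 ∈ I → R < ‖p.2‖ → H p = 0) {t : ℝ} (ht : t ∈ I) :
    HasDerivAt (fun s => ∫ x, H (s, x)) (∫ x, pd0 H (t, x)) t := by
  obtain ⟨ε, hε, hball⟩ := Metric.isOpen_iff.1 hI t ht
  have hsub : Metric.closedBall t (ε / 2) ⊆ I :=
    (Metric.closedBall_subset_ball (by linarith)).trans hball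
  have hc := cd_fderiv hI hH (1, 0)
  have hK : IsCompact (Metric.closedBall t (ε / 2) ×ˢ Metric.closedBall (0 : Space) R) :=
    (isCompact_closedBall _ _).prod (isCompact_closedBall _ _)
  obtain ⟨C, hC⟩ := hK.exists_bound_of_continuousOn (f := fun p => fderiv ℝ H p (1, 0))
    (hc.mono (prod_mono hsub (subset_univ _)))
  have key := hasDerivAt_integral_of_dominated_loc_of_deriv_le (μ := (volume : Measure Space))
    (F := fun s x => H (s, x)) (F' := fun s x => pd0 H (s, x)) (x₀ := t)
    (s := Metric.closedBall t (ε / 2))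
    (bound := (Metric.closedBall (0 : Space) R).indicator (fun _ => C))
    (Metric.closedBall_mem_nhds t (by linarith)) ?_ ?_ ?_ ?_ ?_ ?_
  · exact key.2
  · filter_upwards [hI.mem_nhds ht] with s hs
    exact (slice_cont hH.continuousOn hs).aestronglyMeasurable
  · exact slice_int hH.continuousOn ht sH
  · exact (slice_cont hc ht).aestronglyMeasurable
  · refine Filter.Eventually.of_forall fun x s hs => ?_
    by_cases hx : x ∈ Metric.closedBall (0 : Space) R
    · rw [indicator_of_mem hx]
      exact hC (s, x) ⟨hs, hx⟩
    · rw [indicator_of_notMem hx]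
      have := supp_deriv hI sH (s, x) (hsub hs) (by simpa using hx)
      simp [pd0, this]
  · apply (integrable_indicator_iff Metric.isClosed_closedBall.measurableSet).2
    exact integrableOn_const (by exact measure_closedBall_lt_top.ne)
  · refine Filter.Eventually.of_forall fun x s hs => ?_
    exact slice_t (cd_diff hI one_ne_zero hH (hsub hs))

lemma int_pdi {I : Set ℝ} (hI : IsOpen I) {R : ℝ} {H : ℝ × Space → ℝ}
    (hH : ContDiffOn ℝ 1 H (I ×ˢ univ))
    (sH : ∀ p : ℝ × Space, p.1 ∈ I → R < ‖p.2‖ → H p = 0) {t : ℝ} (ht : t ∈ I) (i : Fin 3) :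
    Integrable (fun x => pdi i H (t, x)) ∧ ∫ x, pdi i H (t, x) = 0 := by
  have hi : Integrable (fun x => pdi i H (t, x)) := by
    refine slice_int (I := I) (R := R) (cd_fderiv hI hH _) ht ?_
    intro p hp hR
    simp [supp_deriv hI sH p hp hR]
  refine ⟨hi, ?_⟩
  have hd : ∀ x, DifferentiableAt ℝ H (t, x) := fun x => cd_diff hI one_ne_zero hH ht
  have he : (fun x => fderiv ℝ (fun y => H (t, y)) x (EuclideanSpace.single i 1)) =
      fun x => pdi i H (t, x) := by
    funext x; exact slice_x_fderiv (hd x) i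
  have := integral_mul_fderiv_eq_neg_fderiv_mul_of_integrable (μ := (volume : Measure Space))
    (f := fun _ => (1 : ℝ)) (g := fun y => H (t, y)) (v := EuclideanSpace.single i 1)
    (by simp) (by simpa [he] using hi)
    (by simpa using slice_int hH.continuousOn ht sH) (by fun_prop)
    (fun x _ => (slice_x (hd x)).differentiableAt)
  simpa [he] using this

lemma std_div {I : Set ℝ} (hI : IsOpen I) {R : ℝ} {H : ℝ × Space → ℝ}
    {X : Fin 3 → ℝ × Space → ℝ}
    (hH : ContDiffOn ℝ 1 H (I ×ˢ univ)) (hX : ∀ i, ContDiffOn ℝ 1 (X i) (I ×ˢ univ))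
    (sH : ∀ p : ℝ × Space, p.1 ∈ I → R < ‖p.2‖ → H p = 0)
    (sX : ∀ i, ∀ p : ℝ × Space, p.1 ∈ I → R < ‖p.2‖ → X i p = 0) {t : ℝ} (ht : t ∈ I) :
    Integrable (fun x => pd0 H (t, x) + ∑ i, pdi i (X i) (t, x)) ∧
    HasDerivAt (fun s => ∫ x, H (s, x))
      (∫ x, (pd0 H (t, x) + ∑ i, pdi i (X i) (t, x))) t := by
  have h0 := leibniz hI hH sH ht
  have hi0 : Integrable (fun x => pd0 H (t, x)) := by
    refine slice_int (I := I) (R := R) (cd_fderiv hI hH _) ht ?_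
    intro p hp hR
    simp [supp_deriv hI sH p hp hR]
  refine ⟨hi0.add (integrable_finsetSum _ fun i _ => (int_pdi hI (hX i) (sX i) ht i).1), ?_⟩
  rw [integral_add hi0 (integrable_finsetSum _ fun i _ => (int_pdi hI (hX i) (sX i) ht i).1),
    integral_finsetSum _ fun i _ => (int_pdi hI (hX i) (sX i) ht i).1]
  simpa [fun i => (int_pdi hI (hX i) (sX i) ht i).2] using h0

lemma loglog_pos (v : ℝ) : 0 < Real.log (Real.log (10 + v ^ 2)) := by
  apply Real.log_pos
  rw [Real.lt_log_iff_exp_lt (by positivity)]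
  have := Real.exp_one_lt_d9
  nlinarith [sq_nonneg v]

lemma g_continuous (c : ℝ) : Continuous (g c) := by
  unfold g
  refine Continuous.rpow_const ?_ (fun x => Or.inl (loglog_pos x).ne')
  refine Continuous.log ?_ ?_
  · exact Continuous.log (by fun_prop) (fun x => by positivity)
  · intro x h
    have := loglog_pos x
    rw [h] at this; simp at this

lemma f_continuous (c : ℝ) : Continuous (f c) := by
  unfold f; exact (by fun_prop : Continuous fun u : ℝ => u ^ 5).mul (g_continuous c)

lemma g_mono {c : ℝ} (hc : 0 < c) {a b : ℝ} (h : |a| ≤ |b|) : g c a ≤ g c b := by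
  unfold g
  have h2 : a ^ 2 ≤ b ^ 2 := sq_le_sq.2 h
  apply Real.rpow_le_rpow (loglog_pos a).le _ hc.le
  have h1 : 0 < Real.log (10 + a ^ 2) := Real.log_pos (by nlinarith [sq_nonneg a])
  apply Real.log_le_log h1
  apply Real.log_le_log (by positivity)
  linarith

lemma g_pos (c v : ℝ) : 0 < g c v := Real.rpow_pos_of_pos (loglog_pos v) c

lemma f_neg (c v : ℝ) : f c (-v) = - f c v := by
  unfold f g; rw [neg_sq]; ring

lemma Fpot_neg (c v : ℝ) : Fpot c (-v) = Fpot c v := by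
  unfold Fpot
  have := intervalIntegral.integral_comp_neg (a := 0) (b := v) (f c)
  simp only [neg_zero, f_neg, intervalIntegral.integral_neg] at this
  rw [intervalIntegral.integral_symm, ← this, neg_neg]

lemma Fpot_hasDerivAt (c v : ℝ) : HasDerivAt (Fpot c) (f c v) v :=
  intervalIntegral.integral_hasDerivAt_right ((f_continuous c).intervalIntegrable _ _)
    ((f_continuous c).stronglyMeasurableAtFilter _ _) (f_continuous c).continuousAt

lemma Fpot_contDiff (c : ℝ) : ContDiff ℝ 1 (Fpot c) := by
  rw [contDiff_one_iff_deriv]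
  refine ⟨fun v => (Fpot_hasDerivAt c v).differentiableAt, ?_⟩
  have : deriv (Fpot c) = f c := funext fun v => (Fpot_hasDerivAt c v).deriv
  rw [this]; exact f_continuous c

lemma Fpot_abs (c v : ℝ) : Fpot c |v| = Fpot c v := by
  rcases abs_choice v with h | h <;> rw [h]
  exact Fpot_neg c v

lemma Fpot_bounds_nonneg {c : ℝ} (hc : 0 < c) {v : ℝ} (hv : 0 ≤ v) :
    g c 0 / 6 * v ^ 6 ≤ Fpot c v ∧ Fpot c v ≤ g c v / 6 * v ^ 6 := by
  have h6 : ∀ k : ℝ, ∫ s in (0:ℝ)..v, s ^ 5 * k = k / 6 * v ^ 6 := by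
    intro k
    rw [intervalIntegral.integral_mul_const, integral_pow]
    norm_num; ring
  constructor
  · rw [← h6]
    apply intervalIntegral.integral_mono_on hv
    · exact (by fun_prop : Continuous fun s : ℝ => s ^ 5 * g c 0).intervalIntegrable _ _
    · exact (f_continuous c).intervalIntegrable _ _
    · intro s hs
      exact mul_le_mul_of_nonneg_left (g_mono hc (by simp)) (pow_nonneg hs.1 5)
  · rw [← h6]
    apply intervalIntegral.integral_mono_on hv
    · exact (f_continuous c).intervalIntegrable _ _
    · exact (by fun_prop : Continuous fun s : ℝ => s ^ 5 * g c v).intervalIntegrable _ _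
    · intro s hs
      refine mul_le_mul_of_nonneg_left (g_mono hc ?_) (pow_nonneg hs.1 5)
      rw [abs_of_nonneg hs.1, abs_of_nonneg hv]; exact hs.2

lemma Fpot_lower {c : ℝ} (hc : 0 < c) (v : ℝ) : g c 0 / 6 * v ^ 6 ≤ Fpot c v := by
  have := (Fpot_bounds_nonneg hc (abs_nonneg v)).1
  rwa [Fpot_abs, Even.pow_abs (by decide)] at this

lemma Fpot_nonneg {c : ℝ} (hc : 0 < c) (v : ℝ) : 0 ≤ Fpot c v :=
  le_trans (by have := g_pos c 0; positivity) (Fpot_lower hc v)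

lemma R_nonneg {c : ℝ} (hc : 0 < c) (v : ℝ) : 0 ≤ v * f c v - 4 * Fpot c v := by
  have h := (Fpot_bounds_nonneg hc (abs_nonneg v)).2
  have hg : g c |v| = g c v := by unfold g; rw [sq_abs]
  rw [Fpot_abs, Even.pow_abs (by decide), hg] at h
  have : v * f c v = g c v * v ^ 6 := by unfold f; ring
  have h2 := Fpot_nonneg hc v
  rw [this]; linarith

/-- Directional derivative at a point. -/
def LD (h : ℝ × Space → ℝ) (a : ℝ) (p v : ℝ × Space) : Prop :=
  HasDerivAt (fun s : ℝ => h (p + s • v)) a 0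

lemma LD_of {h : ℝ × Space → ℝ} {p : ℝ × Space} (hd : DifferentiableAt ℝ h p) (v : ℝ × Space) :
    LD h (fderiv ℝ h p v) p v :=
  hd.hasFDerivAt.hasLineDerivAt v

lemma LD.eq {h : ℝ × Space → ℝ} {p : ℝ × Space} {a : ℝ} {v : ℝ × Space} (h1 : LD h a p v)
    (hd : DifferentiableAt ℝ h p) : fderiv ℝ h p v = a :=
  (LD_of hd v).unique h1

lemma LD.mul {h k : ℝ × Space → ℝ} {p : ℝ × Space} {a b : ℝ} {v : ℝ × Space} (h1 : LD h a p v)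
    (h2 : LD k b p v) : LD (fun q => h q * k q) (a * k p + h p * b) p v := by
  have := HasDerivAt.fun_mul h1 h2
  simpa [LD] using this

lemma LD.add {h k : ℝ × Space → ℝ} {p : ℝ × Space} {a b : ℝ} {v : ℝ × Space} (h1 : LD h a p v)
    (h2 : LD k b p v) : LD (fun q => h q + k q) (a + b) p v := HasDerivAt.add h1 h2

lemma LD.sub {h k : ℝ × Space → ℝ} {p : ℝ × Space} {a b : ℝ} {v : ℝ × Space} (h1 : LD h a p v)
    (h2 : LD k b p v) : LD (fun q => h q - k q) (a - b) p v := HasDerivAt.sub h1 h2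

lemma LD.neg {h : ℝ × Space → ℝ} {p : ℝ × Space} {a : ℝ} {v : ℝ × Space} (h1 : LD h a p v) :
    LD (fun q => - h q) (-a) p v := HasDerivAt.neg h1

lemma LD.sq {h : ℝ × Space → ℝ} {p : ℝ × Space} {a : ℝ} {v : ℝ × Space} (h1 : LD h a p v) :
    LD (fun q => h q ^ 2) (2 * h p * a) p v := by
  have := h1.mul h1
  convert this using 1
  · funext q; ring
  · ring

lemma LD.cmul {h : ℝ × Space → ℝ} {p : ℝ × Space} {a : ℝ} {v : ℝ × Space} (k : ℝ)
    (h1 : LD h a p v) : LD (fun q => k * h q) (k * a) p v := HasDerivAt.const_mul k h1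

lemma LD.sum {h : Fin 3 → ℝ × Space → ℝ} {p : ℝ × Space} {a : Fin 3 → ℝ} {v : ℝ × Space}
    (h1 : ∀ i, LD (h i) (a i) p v) : LD (fun q => ∑ i, h i q) (∑ i, a i) p v := by
  have := HasDerivAt.fun_sum (u := Finset.univ) (fun i _ => h1 i)
  simpa [LD] using this

lemma LD.Fp {h : ℝ × Space → ℝ} {p : ℝ × Space} {a : ℝ} {v : ℝ × Space} (c : ℝ)
    (h1 : LD h a p v) : LD (fun q => Fpot c (h q)) (f c (h p) * a) p v := by
  have h2 : HasDerivAt (Fpot c) (f c (h p)) (h (p + (0:ℝ) • v)) := by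
    simpa using Fpot_hasDerivAt c (h p)
  exact h2.comp (0:ℝ) h1

lemma LD_time (p v : ℝ × Space) (δ : ℝ) : LD (fun q => q.1 + δ) v.1 p v := by
  have h : HasDerivAt (fun s : ℝ => p.1 + s * v.1 + δ) v.1 0 := by
    have := (((hasDerivAt_id (0:ℝ)).mul_const v.1).const_add p.1).add_const δ
    simpa using this
  simpa [LD] using h

lemma LD_coord (p v : ℝ × Space) (i : Fin 3) : LD (fun q => q.2 i) (v.2 i) p v := by
  have h : HasDerivAt (fun s : ℝ => p.2 i + s * v.2 i) (v.2 i) 0 := by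
    have := (((hasDerivAt_id (0:ℝ)).mul_const (v.2 i)).const_add (p.2 i))
    simpa using this
  simpa [LD] using h

/-- Energy density. -/
def en (c : ℝ) (U : ℝ × Space → ℝ) (p : ℝ × Space) : ℝ :=
  1/2 * (pd0 U p) ^ 2 + 1/2 * (∑ i, (pdi i U p) ^ 2) + Fpot c (U p)

/-- Morawetz density. -/
def QQ (c δ : ℝ) (U : ℝ × Space → ℝ) (p : ℝ × Space) : ℝ :=
  (p.1 + δ) * en c U p + pd0 U p * (∑ i, p.2 i * pdi i U p) + U p * pd0 U p

/-- Morawetz flux. -/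
def PP (c δ : ℝ) (U : ℝ × Space → ℝ) (i : Fin 3) (p : ℝ × Space) : ℝ :=
  ((p.1 + δ) * pd0 U p + (∑ j, p.2 j * pdi j U p) + U p) * pdi i U p
    + p.2 i * (1/2 * (pd0 U p) ^ 2 - 1/2 * (∑ j, (pdi j U p) ^ 2) - Fpot c (U p))

lemma LD_en {c : ℝ} {U : ℝ × Space → ℝ} {p : ℝ × Space} (v : ℝ × Space)
    (hU : DifferentiableAt ℝ U p) (h0 : DifferentiableAt ℝ (pd0 U) p)
    (hi : ∀ i, DifferentiableAt ℝ (pdi i U) p) :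
    LD (en c U) (1/2 * (2 * pd0 U p * fderiv ℝ (pd0 U) p v)
      + 1/2 * (∑ i, 2 * pdi i U p * fderiv ℝ (pdi i U) p v) + f c (U p) * fderiv ℝ U p v) p v :=
  (((LD_of h0 v).sq.cmul _).add ((LD.sum fun i => (LD_of (hi i) v).sq).cmul _)).add
    ((LD_of hU v).Fp c)

lemma en_div {c : ℝ} {U : ℝ × Space → ℝ} {p : ℝ × Space}
    (hU : DifferentiableAt ℝ U p) (h0 : DifferentiableAt ℝ (pd0 U) p)
    (hi : ∀ i, DifferentiableAt ℝ (pdi i U) p) (he : DifferentiableAt ℝ (en c U) p)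
    (hp : ∀ i, DifferentiableAt ℝ (fun q => pd0 U q * pdi i U q) p)
    (hs0 : ∀ i, pd0 (pdi i U) p = pdi i (pd0 U) p)
    (heq : pd0 (pd0 U) p - ∑ i, pdi i (pdi i U) p = - f c (U p)) :
    pd0 (en c U) p - ∑ i, pdi i (fun q => pd0 U q * pdi i U q) p = 0 := by
  have h1 : pd0 (en c U) p = _ := (LD_en (1, 0) hU h0 hi).eq he
  have h2 : ∀ i, pdi i (fun q => pd0 U q * pdi i U q) p = _ := fun i =>
    ((LD_of h0 _).mul (LD_of (hi i) _)).eq (hp i)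
  rw [h1, Finset.sum_congr rfl fun i _ => h2 i]
  simp only [← pd0.eq_1, ← pdi.eq_1, hs0]
  simp only [Fin.sum_univ_three] at heq ⊢
  linear_combination (pd0 U p) * heq

lemma QQ_div {c δ : ℝ} {U : ℝ × Space → ℝ} {p : ℝ × Space}
    (hU : DifferentiableAt ℝ U p) (h0 : DifferentiableAt ℝ (pd0 U) p)
    (hi : ∀ i, DifferentiableAt ℝ (pdi i U) p) (hq : DifferentiableAt ℝ (QQ c δ U) p)
    (hp : ∀ i, DifferentiableAt ℝ (PP c δ U i) p)
    (hs0 : ∀ i, pd0 (pdi i U) p = pdi i (pd0 U) p)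
    (hs : ∀ i j, pdi i (pdi j U) p = pdi j (pdi i U) p)
    (heq : pd0 (pd0 U) p - ∑ i, pdi i (pdi i U) p = - f c (U p)) :
    pd0 (QQ c δ U) p - ∑ i, pdi i (PP c δ U i) p = -(U p * f c (U p) - 4 * Fpot c (U p)) := by
  have h1 : pd0 (QQ c δ U) p = _ := (((((LD_time p (1, 0) δ).mul (LD_en (c := c) (1, 0) hU h0 hi)).add
    ((LD_of h0 (1, 0)).mul (LD.sum fun i => (LD_coord p (1, 0) i).mul (LD_of (hi i) (1, 0))))).add
    ((LD_of hU (1, 0)).mul (LD_of h0 (1, 0))) : LD (QQ c δ U) _ p (1, 0))).eq hq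
  have h2 : ∀ i, pdi i (PP c δ U i) p = _ := fun i =>
    (((((((LD_time p _ δ).mul (LD_of h0 _)).add
    (LD.sum fun j => (LD_coord p _ j).mul (LD_of (hi j) _))).add (LD_of hU _)).mul
      (LD_of (hi i) _)).add
    ((LD_coord p _ i).mul ((((LD_of h0 _).sq.cmul (1/2)).sub
      ((LD.sum fun j => (LD_of (hi j) _).sq).cmul (1/2))).sub ((LD_of hU _).Fp c))) :
      LD (PP c δ U i) _ p (0, EuclideanSpace.single i 1))).eq (hp i)
  rw [h1, Finset.sum_congr rfl fun i _ => h2 i]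
  simp only [← pd0.eq_1, ← pdi.eq_1, hs0, en]
  simp only [Fin.sum_univ_three] at heq ⊢
  simp [hs 1 0, hs 2 0, hs 2 1]
  linear_combination ((p.1 + δ) * pd0 U p + (p.2 0 * pdi 0 U p + p.2 1 * pdi 1 U p
    + p.2 2 * pdi 2 U p) + U p) * heq

/-- The cutoff profile. -/
def cut (δ s : ℝ) : ℝ := Real.smoothTransition (s / δ + 1)

lemma cut_contDiff (δ : ℝ) {n : ℕ∞} : ContDiff ℝ n (cut δ) := by
  unfold cut
  exact Real.smoothTransition.contDiff.comp (by fun_prop)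

lemma cut_nonneg (δ s : ℝ) : 0 ≤ cut δ s := Real.smoothTransition.nonneg _

lemma cut_le_one (δ s : ℝ) : cut δ s ≤ 1 := Real.smoothTransition.le_one _

lemma cut_one {δ s : ℝ} (hδ : 0 < δ) (hs : 0 ≤ s) : cut δ s = 1 := by
  apply Real.smoothTransition.one_of_one_le
  have : 0 ≤ s / δ := by positivity
  linarith

lemma cut_zero {δ s : ℝ} (hδ : 0 < δ) (hs : s ≤ -δ) : cut δ s = 0 := by
  apply Real.smoothTransition.zero_of_nonpos
  have : s / δ ≤ -1 := by rw [div_le_iff₀ hδ]; linarith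
  linarith

/-- Derivative of the cutoff profile. -/
def cut1 (δ s : ℝ) : ℝ := deriv (cut δ) s

lemma cut1_contDiff (δ : ℝ) {n : ℕ∞} : ContDiff ℝ n (cut1 δ) := by
  have h : ContDiff ℝ ((n : WithTop ℕ∞) + 1) (cut δ) := cut_contDiff δ (n := n + 1)
  exact (contDiff_succ_iff_deriv.1 h).2.2

lemma cut1_nonneg {δ : ℝ} (hδ : 0 < δ) (s : ℝ) : 0 ≤ cut1 δ s := by
  apply Monotone.deriv_nonneg
  intro a b hab
  apply Real.smoothTransition.monotone
  gcongr

lemma cut1_zero {δ s : ℝ} (hδ : 0 < δ) (hs : 0 < s) : cut1 δ s = 0 := by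
  have : cut δ =ᶠ[nhds s] fun _ => 1 := by
    filter_upwards [lt_mem_nhds hs] with r hr using cut_one hδ hr.le
  unfold cut1; rw [this.deriv_eq]; simp

lemma cut1_zero' {δ s : ℝ} (hδ : 0 < δ) (hs : s < -δ) : cut1 δ s = 0 := by
  have : cut δ =ᶠ[nhds s] fun _ => 0 := by
    filter_upwards [gt_mem_nhds hs] with r hr using cut_zero hδ hr.le
  unfold cut1; rw [this.deriv_eq]; simp

/-- Composition with `t - |x|`. -/
def rad (Ψ : ℝ → ℝ) (p : ℝ × Space) : ℝ := Ψ (p.1 - ‖p.2‖)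

lemma inside_nhds {p : ℝ × Space} (h : ‖p.2‖ < p.1) :
    ∀ᶠ q : ℝ × Space in nhds p, 0 < q.1 - ‖q.2‖ := by
  have : IsOpen {q : ℝ × Space | 0 < q.1 - ‖q.2‖} := isOpen_lt continuous_const (by fun_prop)
  exact this.mem_nhds (by simpa using h)

lemma rad_contDiffAt {Ψ : ℝ → ℝ} {n : WithTop ℕ∞} (hΨ : ContDiff ℝ n Ψ) {k : ℝ}
    (hk : ∀ s, 0 < s → Ψ s = k) {p : ℝ × Space} (hp : 0 < p.1) : ContDiffAt ℝ n (rad Ψ) p := by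
  by_cases h : ‖p.2‖ < p.1
  · have : rad Ψ =ᶠ[nhds p] fun _ => k := by
      filter_upwards [inside_nhds h] with q hq using hk _ hq
    exact contDiffAt_const.congr_of_eventuallyEq this
  · have hx : p.2 ≠ 0 := by
      intro h0; rw [h0] at h; simp at h; linarith
    unfold rad
    exact hΨ.contDiffAt.comp p (contDiffAt_fst.sub (contDiffAt_snd.norm ℝ hx))

lemma om_contDiffAt {Ψ : ℝ → ℝ} {n : WithTop ℕ∞} (hΨ : ContDiff ℝ n Ψ)
    (hk : ∀ s, 0 < s → Ψ s = 0) (i : Fin 3) {p : ℝ × Space} (hp : 0 < p.1) :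
    ContDiffAt ℝ n (fun q => rad Ψ q * (q.2 i / ‖q.2‖)) p := by
  by_cases h : ‖p.2‖ < p.1
  · have : (fun q => rad Ψ q * (q.2 i / ‖q.2‖)) =ᶠ[nhds p] fun _ => 0 := by
      filter_upwards [inside_nhds h] with q hq
      rw [rad, hk _ hq, zero_mul]
    exact contDiffAt_const.congr_of_eventuallyEq this
  · have hx : p.2 ≠ 0 := by
      intro h0; rw [h0] at h; simp at h; linarith
    refine (rad_contDiffAt hΨ hk hp).mul (ContDiffAt.div ?_ (contDiffAt_snd.norm ℝ hx) (by simpa using hx))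
    have : ContDiff ℝ n (fun q : ℝ × Space => q.2 i) := by fun_prop
    exact this.contDiffAt

lemma LD_norm {p v : ℝ × Space} (hx : p.2 ≠ 0) :
    LD (fun q => ‖q.2‖) (inner ℝ p.2 v.2 / ‖p.2‖) p v := by
  have h1 : HasDerivAt (fun s : ℝ => p.2 + s • v.2) v.2 0 := by
    have := ((hasDerivAt_id (0:ℝ)).smul_const v.2).const_add p.2
    simpa using this
  have h2 := (h1.norm_sq).sqrt (by simpa using hx)
  unfold LD
  convert h2 using 1
  · funext s; simp [Real.sqrt_sq]
  · have := norm_ne_zero_iff.2 hx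
    simp [Real.sqrt_sq]
    field_simp

lemma rad_LD {Ψ : ℝ → ℝ} (hΨ : Differentiable ℝ Ψ) {k : ℝ}
    (hk : ∀ s, 0 < s → Ψ s = k) {p : ℝ × Space} (hp : 0 < p.1) (v : ℝ × Space) :
    LD (rad Ψ) (deriv Ψ (p.1 - ‖p.2‖) * (v.1 - inner ℝ p.2 v.2 / ‖p.2‖)) p v := by
  by_cases h : ‖p.2‖ < p.1
  · have h1 : rad Ψ =ᶠ[nhds p] fun _ => k := by
      filter_upwards [inside_nhds h] with q hq using hk _ hq
    have h2 : deriv Ψ (p.1 - ‖p.2‖) = 0 := by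
      have : Ψ =ᶠ[nhds (p.1 - ‖p.2‖)] fun _ => k := by
        filter_upwards [lt_mem_nhds (sub_pos.2 h)] with r hr using hk r hr
      rw [this.deriv_eq]; simp
    rw [h2, zero_mul]
    have h3 := LD_of (p := p) (h := rad Ψ) (h1.differentiableAt_iff.2 (by simp)) v
    rw [h1.fderiv_eq] at h3
    simpa using h3
  · have hx : p.2 ≠ 0 := by
      intro h0; rw [h0] at h; simp at h; linarith
    have h1 := (LD_time p v 0).sub (LD_norm (v := v) hx)
    have h2 : HasDerivAt Ψ (deriv Ψ (p.1 - ‖p.2‖))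
        ((p + (0:ℝ) • v).1 + 0 - ‖(p + (0:ℝ) • v).2‖) := by
      simpa using (hΨ (p.1 - ‖p.2‖)).hasDerivAt
    have h3 := h2.comp (0:ℝ) h1
    unfold LD rad
    simpa [Function.comp_def] using h3

lemma sum_sq_norm (x : Space) : x 0 ^ 2 + x 1 ^ 2 + x 2 ^ 2 = ‖x‖ ^ 2 := by
  rw [EuclideanSpace.real_norm_sq_eq, Fin.sum_univ_three]

/-- Product with the main cutoff. -/
lemma cut_div {δ : ℝ} (hδ : 0 < δ) {Q : ℝ × Space → ℝ} {P : Fin 3 → ℝ × Space → ℝ}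
    {p : ℝ × Space} (hp : 0 < p.1) (hQ : DifferentiableAt ℝ Q p)
    (hP : ∀ i, DifferentiableAt ℝ (P i) p) :
    pd0 (fun q => rad (cut δ) q * Q q) p + ∑ i, pdi i (fun q => rad (cut δ) q * P i q) p
      = rad (cut1 δ) p * (Q p - ∑ i, p.2 i / ‖p.2‖ * P i p)
        + rad (cut δ) p * (pd0 Q p + ∑ i, pdi i (P i) p) := by
  have hd : DifferentiableAt ℝ (rad (cut δ)) p :=
    (rad_contDiffAt (n := 1) (cut_contDiff δ (n := 1)) (fun s hs => cut_one hδ hs.le) hp).differentiableAt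
      one_ne_zero
  have hr := rad_LD ((cut_contDiff δ (n := 1)).differentiable one_ne_zero)
    (fun s hs => cut_one hδ hs.le) hp
  have h1 : pd0 (fun q => rad (cut δ) q * Q q) p = _ :=
    ((hr (1, 0)).mul (LD_of hQ _)).eq (hd.mul hQ)
  have h2 : ∀ i, pdi i (fun q => rad (cut δ) q * P i q) p = _ := fun i =>
    ((hr (0, EuclideanSpace.single i 1)).mul (LD_of (hP i) _)).eq (hd.mul (hP i))
  rw [h1, Finset.sum_congr rfl fun i _ => h2 i]
  simp only [← pd0.eq_1, ← pdi.eq_1, ← cut1.eq_1, Fin.sum_univ_three, rad]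
  simp [EuclideanSpace.inner_single_right]
  ring

lemma shell_div {δ : ℝ} (hδ : 0 < δ) {U : ℝ × Space → ℝ}
    {p : ℝ × Space} (hp : 0 < p.1) (hU : DifferentiableAt ℝ U p) :
    pd0 (fun q => rad (cut1 δ) q * U q ^ 2) p
      + ∑ i, pdi i (fun q => rad (cut1 δ) q * (q.2 i / ‖q.2‖) * U q ^ 2) p
      = 2 * (rad (cut1 δ) p * (U p * (pd0 U p + ∑ i, p.2 i / ‖p.2‖ * pdi i U p)
        + U p ^ 2 / ‖p.2‖)) := by
  by_cases h : ‖p.2‖ < p.1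
  · have e1 : (fun q => rad (cut1 δ) q * U q ^ 2) =ᶠ[nhds p] fun _ => 0 := by
      filter_upwards [inside_nhds h] with q hq
      simp [rad, cut1_zero hδ hq]
    have e2 : ∀ i : Fin 3, (fun q => rad (cut1 δ) q * (q.2 i / ‖q.2‖) * U q ^ 2) =ᶠ[nhds p]
        fun _ => 0 := by
      intro i
      filter_upwards [inside_nhds h] with q hq
      simp [rad, cut1_zero hδ hq]
    have e3 : rad (cut1 δ) p = 0 := cut1_zero hδ (sub_pos.2 h)
    have e4 : ∀ i : Fin 3, pdi i (fun q => rad (cut1 δ) q * (q.2 i / ‖q.2‖) * U q ^ 2) p = 0 := by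
      intro i
      rw [pdi, (e2 i).fderiv_eq]; simp
    rw [Finset.sum_congr rfl fun i _ => e4 i, e3, pd0, e1.fderiv_eq]
    simp
  · have hx : p.2 ≠ 0 := by
      intro h0; rw [h0] at h; simp at h; linarith
    have hn : ‖p.2‖ ≠ 0 := norm_ne_zero_iff.2 hx
    have hd : DifferentiableAt ℝ (rad (cut1 δ)) p :=
      (rad_contDiffAt (n := 1) (cut1_contDiff δ (n := 1)) (fun s hs => cut1_zero hδ hs)
        hp).differentiableAt one_ne_zero
    have hdo : ∀ i : Fin 3, DifferentiableAt ℝ (fun q => rad (cut1 δ) q * (q.2 i / ‖q.2‖)) p :=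
      fun i => (om_contDiffAt (n := 1) (cut1_contDiff δ (n := 1)) (fun s hs => cut1_zero hδ hs) i
        hp).differentiableAt one_ne_zero
    have hr := rad_LD ((cut1_contDiff δ (n := 1)).differentiable one_ne_zero)
      (fun s hs => cut1_zero hδ hs) hp
    have hom : ∀ i : Fin 3, LD (fun q => q.2 i / ‖q.2‖)
        (1 / ‖p.2‖ - p.2 i ^ 2 / ‖p.2‖ ^ 3) p (0, EuclideanSpace.single i 1) := by
      intro i
      have := HasDerivAt.fun_div (LD_coord p (0, EuclideanSpace.single i 1) i)
        (LD_norm (v := (0, EuclideanSpace.single i 1)) hx) (by simpa using hx)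
      refine HasDerivAt.congr_deriv this ?_
      simp [EuclideanSpace.inner_single_right]
      field_simp
    have h1 : pd0 (fun q => rad (cut1 δ) q * U q ^ 2) p = _ :=
      ((hr (1, 0)).mul (LD_of hU _).sq).eq (hd.mul (hU.pow 2))
    have h2 : ∀ i, pdi i (fun q => rad (cut1 δ) q * (q.2 i / ‖q.2‖) * U q ^ 2) p = _ := fun i =>
      (((hr (0, EuclideanSpace.single i 1)).mul (hom i)).mul (LD_of hU _).sq).eq
        ((hdo i).mul (hU.pow 2))
    rw [h1, Finset.sum_congr rfl fun i _ => h2 i]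
    simp only [← pd0.eq_1, ← pdi.eq_1, Fin.sum_univ_three, rad]
    simp [EuclideanSpace.inner_single_right]
    have hs := sum_sq_norm p.2
    generalize ‖p.2‖ = r at *
    generalize deriv (cut1 δ) (p.1 - r) = d
    generalize cut1 δ (p.1 - r) = e
    field_simp
    linear_combination (-(d * r * U p ^ 2) - e * U p ^ 2) * hs

/-- Solutions on an open time interval, in space-time form. -/
structure Good (c δ R : ℝ) (I : Set ℝ) (U : ℝ × Space → ℝ) : Prop where
  hI : IsOpen I
  hδ : 0 < δ
  low : ∀ t ∈ I, δ < t
  up : ∀ t ∈ I, t + δ ≤ R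
  smooth : ContDiffOn ℝ (⊤ : ℕ∞) U (I ×ˢ univ)
  eqn : ∀ p : ℝ × Space, p.1 ∈ I → pd0 (pd0 U) p - ∑ i, pdi i (pdi i U) p = - f c (U p)

lemma smooth_dir {I : Set ℝ} (hI : IsOpen I) {U : ℝ × Space → ℝ}
    (h : ContDiffOn ℝ (⊤ : ℕ∞) U (I ×ˢ univ)) (v : ℝ × Space) :
    ContDiffOn ℝ (⊤ : ℕ∞) (fun p => fderiv ℝ U p v) (I ×ˢ univ) := by
  have := h.fderiv_of_isOpen (m := (⊤ : ℕ∞)) (hI.prod isOpen_univ) (by simp)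
  exact this.clm_apply contDiffOn_const

namespace Good

variable {c δ R : ℝ} {I : Set ℝ} {U : ℝ × Space → ℝ}

lemma s0 (G : Good c δ R I U) : ContDiffOn ℝ (⊤ : ℕ∞) (pd0 U) (I ×ˢ univ) :=
  smooth_dir G.hI G.smooth _

lemma si (G : Good c δ R I U) (i : Fin 3) : ContDiffOn ℝ (⊤ : ℕ∞) (pdi i U) (I ×ˢ univ) :=
  smooth_dir G.hI G.smooth _

lemma one_le : (1 : WithTop ℕ∞) ≤ ((⊤ : ℕ∞) : WithTop ℕ∞) := by exact_mod_cast le_top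

lemma two_le : (2 : WithTop ℕ∞) ≤ ((⊤ : ℕ∞) : WithTop ℕ∞) := 
  WithTop.coe_le_coe.2 (le_top : (2 : ℕ∞) ≤ ⊤)

lemma U1 (G : Good c δ R I U) : ContDiffOn ℝ 1 U (I ×ˢ univ) := G.smooth.of_le one_le
lemma U01 (G : Good c δ R I U) : ContDiffOn ℝ 1 (pd0 U) (I ×ˢ univ) := G.s0.of_le one_le
lemma Ui1 (G : Good c δ R I U) (i : Fin 3) : ContDiffOn ℝ 1 (pdi i U) (I ×ˢ univ) :=
  (G.si i).of_le one_le

lemma symm (G : Good c δ R I U) {p : ℝ × Space} (hp : p.1 ∈ I) (v w : ℝ × Space) :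
    fderiv ℝ (fun q => fderiv ℝ U q v) p w = fderiv ℝ (fun q => fderiv ℝ U q w) p v := by
  have hc : ContDiffAt ℝ (⊤ : ℕ∞) U p :=
    G.smooth.contDiffAt ((G.hI.prod isOpen_univ).mem_nhds ⟨hp, mem_univ _⟩)
  have hd : DifferentiableAt ℝ (fderiv ℝ U) p := by
    have := hc.fderiv_right (m := 1) (by rw [one_add_one_eq_two]; exact two_le)
    exact this.differentiableAt one_ne_zero
  have hs := hc.isSymmSndFDerivAt (by simpa using two_le)
  have h : ∀ v w : ℝ × Space, fderiv ℝ (fun q => fderiv ℝ U q v) p w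
      = fderiv ℝ (fderiv ℝ U) p w v := by
    intro v w
    have := hd.hasFDerivAt.clm_apply (hasFDerivAt_const v p)
    rw [this.fderiv]; simp
  rw [h, h]; exact hs w v

lemma enC (G : Good c δ R I U) : ContDiffOn ℝ 1 (en c U) (I ×ˢ univ) := by
  unfold en
  refine ((contDiffOn_const.mul (G.U01.pow 2)).add (contDiffOn_const.mul
    (ContDiffOn.sum fun i _ => (G.Ui1 i).pow 2))).add ?_
  exact (Fpot_contDiff c).comp_contDiffOn G.U1

lemma coordC (i : Fin 3) : ContDiffOn ℝ 1 (fun q : ℝ × Space => q.2 i) (I ×ˢ univ) := by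
  have : ContDiff ℝ 1 (fun q : ℝ × Space => q.2 i) := by fun_prop
  exact this.contDiffOn

lemma timeC : ContDiffOn ℝ 1 (fun q : ℝ × Space => q.1 + δ) (I ×ˢ univ) := by
  have : ContDiff ℝ 1 (fun q : ℝ × Space => q.1 + δ) := by fun_prop
  exact this.contDiffOn

lemma SC (G : Good c δ R I U) :
    ContDiffOn ℝ 1 (fun p => ∑ i, p.2 i * pdi i U p) (I ×ˢ univ) :=
  ContDiffOn.sum fun i _ => (coordC i).mul (G.Ui1 i)

lemma QQC (G : Good c δ R I U) : ContDiffOn ℝ 1 (QQ c δ U) (I ×ˢ univ) := by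
  unfold QQ
  exact ((timeC.mul G.enC).add (G.U01.mul G.SC)).add (G.U1.mul G.U01)

lemma PPC (G : Good c δ R I U) (i : Fin 3) : ContDiffOn ℝ 1 (PP c δ U i) (I ×ˢ univ) := by
  unfold PP
  refine ((((timeC.mul G.U01).add G.SC).add G.U1).mul (G.Ui1 i)).add ((coordC i).mul
    (((contDiffOn_const.mul (G.U01.pow 2)).sub (contDiffOn_const.mul
    (ContDiffOn.sum fun i _ => (G.Ui1 i).pow 2))).sub ?_))
  exact (Fpot_contDiff c).comp_contDiffOn G.U1

lemma pos (G : Good c δ R I U) {t : ℝ} (ht : t ∈ I) : 0 < t := G.hδ.trans (G.low t ht)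

lemma wC (G : Good c δ R I U) : ContDiffOn ℝ 1 (rad (cut δ)) (I ×ˢ univ) := fun p hp =>
  (rad_contDiffAt (n := 1) (cut_contDiff δ (n := 1)) (fun s hs => cut_one G.hδ hs.le)
    (G.pos hp.1)).contDiffWithinAt

lemma psiC (G : Good c δ R I U) : ContDiffOn ℝ 1 (rad (cut1 δ)) (I ×ˢ univ) := fun p hp =>
  (rad_contDiffAt (n := 1) (cut1_contDiff δ (n := 1)) (fun s hs => cut1_zero G.hδ hs)
    (G.pos hp.1)).contDiffWithinAt

lemma omC (G : Good c δ R I U) (i : Fin 3) :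
    ContDiffOn ℝ 1 (fun q => rad (cut1 δ) q * (q.2 i / ‖q.2‖)) (I ×ˢ univ) := fun p hp =>
  (om_contDiffAt (n := 1) (cut1_contDiff δ (n := 1)) (fun s hs => cut1_zero G.hδ hs) i
    (G.pos hp.1)).contDiffWithinAt

lemma wS (G : Good c δ R I U) (p : ℝ × Space) (hp : p.1 ∈ I) (hR : R < ‖p.2‖) :
    rad (cut δ) p = 0 := cut_zero G.hδ (by have := G.up _ hp; linarith)

lemma psiS (G : Good c δ R I U) (p : ℝ × Space) (hp : p.1 ∈ I) (hR : R < ‖p.2‖) :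
    rad (cut1 δ) p = 0 := cut1_zero' G.hδ (by have := G.up _ hp; linarith)

lemma dd (G : Good c δ R I U) {h : ℝ × Space → ℝ} (hh : ContDiffOn ℝ 1 h (I ×ˢ univ))
    {p : ℝ × Space} (hp : p.1 ∈ I) : DifferentiableAt ℝ h p := cd_diff G.hI one_ne_zero hh hp

/-- Integrability of cutoff times continuous. -/
lemma wInt (G : Good c δ R I U) {h : ℝ × Space → ℝ} (hh : ContinuousOn h (I ×ˢ univ))
    {t : ℝ} (ht : t ∈ I) : Integrable (fun x => rad (cut δ) (t, x) * h (t, x)) :=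
  slice_int (h := fun p => rad (cut δ) p * h p) (R := R) (G.wC.continuousOn.mul hh) ht
    (fun p hp hR => by simp [G.wS p hp hR])

lemma psiInt (G : Good c δ R I U) {h : ℝ × Space → ℝ} (hh : ContinuousOn h (I ×ˢ univ))
    {t : ℝ} (ht : t ∈ I) : Integrable (fun x => rad (cut1 δ) (t, x) * h (t, x)) :=
  slice_int (h := fun p => rad (cut1 δ) p * h p) (R := R) (G.psiC.continuousOn.mul hh) ht
    (fun p hp hR => by simp [G.psiS p hp hR])

end Good

/-- Radial derivative. -/
def Ur (U : ℝ × Space → ℝ) (p : ℝ × Space) : ℝ := ∑ i, p.2 i / ‖p.2‖ * pdi i U p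

/-- Flux density. -/
def qq (c : ℝ) (U : ℝ × Space → ℝ) (p : ℝ × Space) : ℝ := en c U p + pd0 U p * Ur U p

lemma pdi_neg (i : Fin 3) (h : ℝ × Space → ℝ) (p : ℝ × Space) :
    pdi i (fun q => - h q) p = - pdi i h p := by
  unfold pdi; rw [fderiv_fun_neg]; rfl

namespace Good

variable {c δ R : ℝ} {I : Set ℝ} {U : ℝ × Space → ℝ}

lemma ew_deriv (G : Good c δ R I U) {t : ℝ} (ht : t ∈ I) :
    Integrable (fun x => rad (cut1 δ) (t, x) * qq c U (t, x)) ∧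
    HasDerivAt (fun s => ∫ x, rad (cut δ) (s, x) * en c U (s, x))
      (∫ x, rad (cut1 δ) (t, x) * qq c U (t, x)) t := by
  have hPC : ∀ i : Fin 3, ContDiffOn ℝ 1 (fun q => -(pd0 U q * pdi i U q)) (I ×ˢ univ) :=
    fun i => (G.U01.mul (G.Ui1 i)).neg
  have key := std_div G.hI (R := R) (H := fun q => rad (cut δ) q * en c U q)
    (X := fun i q => rad (cut δ) q * (-(pd0 U q * pdi i U q))) (G.wC.mul G.enC)
    (fun i => G.wC.mul (hPC i)) (fun p hp hR => by simp [G.wS p hp hR])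
    (fun i p hp hR => by simp [G.wS p hp hR]) ht
  have he : ∀ x : Space, pd0 (fun q => rad (cut δ) q * en c U q) (t, x)
      + ∑ i, pdi i (fun q => rad (cut δ) q * (-(pd0 U q * pdi i U q))) (t, x)
      = rad (cut1 δ) (t, x) * qq c U (t, x) := by
    intro x
    have hp : ((t, x) : ℝ × Space).1 ∈ I := ht
    rw [cut_div (P := fun i q => -(pd0 U q * pdi i U q)) G.hδ (G.pos ht) (G.dd G.enC hp)
      (fun i => G.dd (hPC i) hp)]
    have h0 := en_div (c := c) (G.dd G.U1 hp) (G.dd G.U01 hp) (fun i => G.dd (G.Ui1 i) hp)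
      (G.dd G.enC hp) (fun i => G.dd (G.U01.mul (G.Ui1 i)) hp)
      (fun i => G.symm hp _ _) (G.eqn _ hp)
    rw [Finset.sum_congr rfl fun i _ => pdi_neg i _ _, Finset.sum_neg_distrib, ← sub_eq_add_neg,
      h0, mul_zero, add_zero]
    simp only [qq, Ur, Fin.sum_univ_three]
    ring
  simpa only [he] using key

lemma Y1_deriv (G : Good c δ R I U) {t : ℝ} (ht : t ∈ I) :
    Integrable (fun x => rad (cut1 δ) (t, x) * (QQ c δ U (t, x) + ∑ i, x i / ‖x‖ * PP c δ U i (t, x))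
      + rad (cut δ) (t, x) * (-(U (t, x) * f c (U (t, x)) - 4 * Fpot c (U (t, x))))) ∧
    HasDerivAt (fun s => ∫ x, rad (cut δ) (s, x) * QQ c δ U (s, x))
      (∫ x, (rad (cut1 δ) (t, x) * (QQ c δ U (t, x) + ∑ i, x i / ‖x‖ * PP c δ U i (t, x))
      + rad (cut δ) (t, x) * (-(U (t, x) * f c (U (t, x)) - 4 * Fpot c (U (t, x)))))) t := by
  have hPC : ∀ i : Fin 3, ContDiffOn ℝ 1 (fun q => -(PP c δ U i q)) (I ×ˢ univ) :=
    fun i => (G.PPC i).neg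
  have key := std_div G.hI (R := R) (H := fun q => rad (cut δ) q * QQ c δ U q)
    (X := fun i q => rad (cut δ) q * (-(PP c δ U i q))) (G.wC.mul G.QQC)
    (fun i => G.wC.mul (hPC i)) (fun p hp hR => by simp [G.wS p hp hR])
    (fun i p hp hR => by simp [G.wS p hp hR]) ht
  have he : ∀ x : Space, pd0 (fun q => rad (cut δ) q * QQ c δ U q) (t, x)
      + ∑ i, pdi i (fun q => rad (cut δ) q * (-(PP c δ U i q))) (t, x)
      = rad (cut1 δ) (t, x) * (QQ c δ U (t, x) + ∑ i, x i / ‖x‖ * PP c δ U i (t, x))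
      + rad (cut δ) (t, x) * (-(U (t, x) * f c (U (t, x)) - 4 * Fpot c (U (t, x)))) := by
    intro x
    have hp : ((t, x) : ℝ × Space).1 ∈ I := ht
    rw [cut_div (P := fun i q => -(PP c δ U i q)) G.hδ (G.pos ht) (G.dd G.QQC hp)
      (fun i => G.dd (hPC i) hp)]
    have h0 := QQ_div (c := c) (δ := δ) (G.dd G.U1 hp) (G.dd G.U01 hp)
      (fun i => G.dd (G.Ui1 i) hp)
      (G.dd G.QQC hp) (fun i => G.dd (G.PPC i) hp)
      (fun i => G.symm hp _ _) (fun i j => G.symm hp _ _) (G.eqn _ hp)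
    rw [Finset.sum_congr rfl fun i _ => pdi_neg i _ _, Finset.sum_neg_distrib, ← sub_eq_add_neg,
      h0]
    simp only [Fin.sum_univ_three]
    ring
  simpa only [he] using key

lemma Y2_deriv (G : Good c δ R I U) {t : ℝ} (ht : t ∈ I) :
    Integrable (fun x => 2 * (rad (cut1 δ) (t, x) * (U (t, x) * (pd0 U (t, x) + Ur U (t, x))
        + U (t, x) ^ 2 / ‖x‖))) ∧
    HasDerivAt (fun s => ∫ x, rad (cut1 δ) (s, x) * U (s, x) ^ 2)
      (∫ x, 2 * (rad (cut1 δ) (t, x) * (U (t, x) * (pd0 U (t, x) + Ur U (t, x))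
        + U (t, x) ^ 2 / ‖x‖))) t := by
  have key := std_div G.hI (R := R) (H := fun q => rad (cut1 δ) q * U q ^ 2)
    (X := fun i q => rad (cut1 δ) q * (q.2 i / ‖q.2‖) * U q ^ 2) (G.psiC.mul (G.U1.pow 2))
    (fun i => (G.omC i).mul (G.U1.pow 2)) (fun p hp hR => by simp [G.psiS p hp hR])
    (fun i p hp hR => by simp [G.psiS p hp hR]) ht
  have he : ∀ x : Space, _ := fun x =>
    shell_div (p := (t, x)) (U := U) G.hδ (G.pos ht) (G.dd G.U1 ht)
  simpa only [he, Ur] using key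

lemma dil (G : Good c δ R I U) {t : ℝ} (ht : t ∈ I) {h : ℝ × Space → ℝ}
    (hh : ContDiffOn ℝ 1 h (I ×ˢ univ)) :
    ∫ x, rad (cut1 δ) (t, x) * (‖x‖ * h (t, x)) =
      ∫ x, rad (cut δ) (t, x) * (3 * h (t, x) + ∑ i, x i * pdi i h (t, x)) := by
  have key := std_div G.hI (R := R) (H := fun q => rad (cut δ) q * (fun _ => (0:ℝ)) q)
    (X := fun i q => rad (cut δ) q * (q.2 i * h q)) (G.wC.mul contDiffOn_const)
    (fun i => G.wC.mul ((coordC i).mul hh)) (fun p hp hR => by simp)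
    (fun i p hp hR => by simp [G.wS p hp hR]) ht
  have he : ∀ x : Space, pd0 (fun q => rad (cut δ) q * (fun _ => (0:ℝ)) q) (t, x)
      + ∑ i, pdi i (fun q => rad (cut δ) q * (q.2 i * h q)) (t, x)
      = rad (cut δ) (t, x) * (3 * h (t, x) + ∑ i, x i * pdi i h (t, x))
        - rad (cut1 δ) (t, x) * (‖x‖ * h (t, x)) := by
    intro x
    have hp : ((t, x) : ℝ × Space).1 ∈ I := ht
    rw [cut_div (P := fun i q => q.2 i * h q) G.hδ (G.pos ht) (differentiableAt_const _)
      (fun i => G.dd ((coordC i).mul hh) hp)]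
    have h2 : ∀ i, pdi i (fun q => q.2 i * h q) (t, x) = _ := fun i =>
      ((LD_coord (t, x) (0, EuclideanSpace.single i 1) i).mul (LD_of (G.dd hh hp) _)).eq
        (G.dd ((coordC i).mul hh) hp)
    rw [Finset.sum_congr rfl fun i _ => h2 i]
    have hz : pd0 (fun _ : ℝ × Space => (0:ℝ)) (t, x) = 0 := by simp [pd0]
    rw [hz]
    simp only [← pdi.eq_1, Fin.sum_univ_three]
    have hs := sum_sq_norm x
    by_cases hx : ‖x‖ = 0
    · have hx0 : x = 0 := norm_eq_zero.1 hx
      subst hx0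
      simp
      ring_nf
      simp
    · simp
      field_simp
      linear_combination (-(rad (cut1 δ) (t, x) * h (t, x))) * hs
  simp only [he] at key
  have h0 : HasDerivAt (fun s : ℝ => ∫ x : Space, rad (cut δ) (s, x) * (0:ℝ)) 0 t := by
    simpa using hasDerivAt_const t (0:ℝ)
  have h1 := key.2.unique h0
  have hp1 : ContinuousOn (fun p : ℝ × Space => ‖p.2‖ * h p) (I ×ˢ univ) :=
    (by fun_prop : ContinuousOn (fun p : ℝ × Space => ‖p.2‖) (I ×ˢ univ)).mul hh.continuousOn
  have hp2 : ContinuousOn (fun p : ℝ × Space => 3 * h p + ∑ i, p.2 i * pdi i h p)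
      (I ×ˢ univ) := by
    refine (continuousOn_const.mul hh.continuousOn).add (continuousOn_finsetSum _ fun i _ => ?_)
    exact (coordC i).continuousOn.mul (cd_fderiv G.hI hh _)
  rw [integral_sub (G.wInt hp2 ht) (G.psiInt hp1 ht)] at h1
  linarith

end Good

lemma S_sq (U : ℝ × Space → ℝ) (p : ℝ × Space) :
    (∑ i, p.2 i * pdi i U p) ^ 2 ≤ ‖p.2‖ ^ 2 * ∑ i, (pdi i U p) ^ 2 := by
  have := Finset.sum_mul_sq_le_sq_mul_sq Finset.univ (fun i => p.2 i) (fun i => pdi i U p)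
  rwa [← EuclideanSpace.real_norm_sq_eq] at this

lemma Ur_eq (U : ℝ × Space → ℝ) (p : ℝ × Space) :
    Ur U p = (∑ i, p.2 i * pdi i U p) / ‖p.2‖ := by
  unfold Ur; rw [Finset.sum_div]
  exact Finset.sum_congr rfl fun i _ => by ring

lemma Ur_sq (U : ℝ × Space → ℝ) (p : ℝ × Space) :
    Ur U p ^ 2 ≤ ∑ i, (pdi i U p) ^ 2 := by
  rw [Ur_eq, div_pow]
  by_cases h : ‖p.2‖ = 0
  · rw [h]; simp; positivity
  · have : 0 < ‖p.2‖ ^ 2 := by positivity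
    rw [div_le_iff₀ this, mul_comm]; exact S_sq U p

lemma qq_lower (c : ℝ) (U : ℝ × Space → ℝ) (p : ℝ × Space) :
    1/2 * (pd0 U p + Ur U p) ^ 2 + Fpot c (U p) ≤ qq c U p := by
  have := Ur_sq U p
  unfold qq en; nlinarith

lemma qq_nonneg {c : ℝ} (hc : 0 < c) (U : ℝ × Space → ℝ) (p : ℝ × Space) : 0 ≤ qq c U p := by
  have := qq_lower c U p
  have h2 := Fpot_nonneg hc (U p)
  nlinarith [sq_nonneg (pd0 U p + Ur U p)]

lemma en_nonneg {c : ℝ} (hc : 0 < c) (U : ℝ × Space → ℝ) (p : ℝ × Space) : 0 ≤ en c U p := by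
  have h2 := Fpot_nonneg hc (U p)
  unfold en; positivity

lemma flux_ident (c δ : ℝ) (U : ℝ × Space → ℝ) (p : ℝ × Space) (hr : 0 < ‖p.2‖) :
    QQ c δ U p + ∑ i, p.2 i / ‖p.2‖ * PP c δ U i p
      + (U p * (pd0 U p + Ur U p) + U p ^ 2 / ‖p.2‖)
    = ‖p.2‖ * (pd0 U p + Ur U p + U p / ‖p.2‖) ^ 2
      + (p.1 + δ - ‖p.2‖) * qq c U p := by
  have hS : (∑ i, p.2 i * pdi i U p) = ‖p.2‖ * Ur U p := by rw [Ur_eq]; field_simp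
  have hP : ∑ i, p.2 i / ‖p.2‖ * PP c δ U i p
      = ((p.1 + δ) * pd0 U p + ‖p.2‖ * Ur U p + U p) * Ur U p
        + ‖p.2‖ * (1/2 * (pd0 U p) ^ 2 - 1/2 * (∑ j, (pdi j U p) ^ 2) - Fpot c (U p)) := by
    unfold PP
    rw [hS]
    have h1 := sum_sq_norm p.2
    have h2 : ‖p.2‖ = (p.2 0 ^ 2 + p.2 1 ^ 2 + p.2 2 ^ 2) / ‖p.2‖ := by
      rw [h1]; field_simp
    generalize hX : (1/2 * (pd0 U p) ^ 2 - 1/2 * (∑ j, (pdi j U p) ^ 2) - Fpot c (U p)) = X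
    generalize hZ : ((p.1 + δ) * pd0 U p + ‖p.2‖ * Ur U p + U p) = Z
    have : ‖p.2‖ * X = (p.2 0 ^ 2 + p.2 1 ^ 2 + p.2 2 ^ 2) / ‖p.2‖ * X := by rw [← h2]
    rw [this]
    unfold Ur
    simp only [Fin.sum_univ_three]
    ring
  rw [hP]
  unfold QQ qq
  rw [hS]
  unfold en
  field_simp
  ring

lemma young6 {v t h : ℝ} (ht : 0 < t) (hh : 0 < h) :
    v ^ 2 / t ≤ t / h ^ 2 * v ^ 6 + h / t ^ 2 := by
  set y := v ^ 2 * t / h with hy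
  have hy0 : 0 ≤ y := by positivity
  have h1 : y ≤ y ^ 3 + 1 := by nlinarith [sq_nonneg (y - 1), mul_nonneg hy0 (sq_nonneg (y - 1))]
  have h2 : v ^ 2 / t = y * (h / t ^ 2) := by rw [hy]; field_simp
  have h3 : t / h ^ 2 * v ^ 6 + h / t ^ 2 = (y ^ 3 + 1) * (h / t ^ 2) := by rw [hy]; field_simp
  rw [h2, h3]
  exact mul_le_mul_of_nonneg_right h1 (by positivity)

lemma U6_le {c : ℝ} (hc : 0 < c) (v : ℝ) : v ^ 6 ≤ 6 / g c 0 * Fpot c v := by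
  have := Fpot_lower hc v
  have hg := g_pos c 0
  rw [div_mul_eq_mul_div, le_div_iff₀ hg]; linarith

/-- The constant in front of the flux. -/
def KK (c T h : ℝ) : ℝ := 8 * T + 12 * T / (g c 0 * h ^ 2)

lemma flux_bound {c δ : ℝ} (hc : 0 < c) (U : ℝ × Space → ℝ) (p : ℝ × Space) {T h : ℝ}
    (hh : 0 < h) (ht : 0 < p.1) (hδ : 0 < δ) (hδt : δ ≤ p.1) (htT : p.1 ≤ T) (h1 : p.1 ≤ ‖p.2‖)
    (h2 : ‖p.2‖ ≤ p.1 + δ) :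
    QQ c δ U p + ∑ i, p.2 i / ‖p.2‖ * PP c δ U i p
      + (U p * (pd0 U p + Ur U p) + U p ^ 2 / ‖p.2‖) ≤ KK c T h * qq c U p + 2 * h / p.1 ^ 2 := by
  have hr : 0 < ‖p.2‖ := ht.trans_le h1
  rw [flux_ident c δ U p hr]
  have hq := qq_lower c U p
  have hF := U6_le hc (U p)
  have hg := g_pos c 0
  have hF0 := Fpot_nonneg hc (U p)
  have hq0 := qq_nonneg hc U p
  have hy := young6 (v := U p) ht hh
  generalize hL : pd0 U p + Ur U p = L at *
  generalize qq c U p = q at *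
  generalize hv : U p = v at *
  generalize ‖p.2‖ = r at *
  generalize p.1 = t at *
  have e1 : r * (L + v / r) ^ 2 ≤ 2 * r * L ^ 2 + 2 * (v ^ 2 / r) := by
    have : 2 * r * L ^ 2 + 2 * (v ^ 2 / r) - r * (L + v / r) ^ 2 = r * (L - v / r) ^ 2 := by
      field_simp; ring
    nlinarith [mul_nonneg hr.le (sq_nonneg (L - v / r))]
  have e2 : v ^ 2 / r ≤ v ^ 2 / t := by gcongr
  have e3 : r * L ^ 2 ≤ r * (2 * q) := mul_le_mul_of_nonneg_left (by linarith) hr.le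
  have hT : 0 < T := ht.trans_le htT
  have e4 : t / h ^ 2 * v ^ 6 ≤ T / h ^ 2 * (6 / g c 0 * q) := by
    have : v ^ 6 ≤ 6 / g c 0 * q := hF.trans (by gcongr; nlinarith [sq_nonneg L])
    gcongr
  have e5 : T / h ^ 2 * (6 / g c 0 * q) * 2 = 12 * T / (g c 0 * h ^ 2) * q := by field_simp; ring
  have e6 : (t + δ - r) * q + 4 * r * q ≤ 8 * T * q := by
    have : t + δ - r + 4 * r ≤ 8 * T := by linarith
    nlinarith
  have e7 : 2 * h / t ^ 2 = 2 * (h / t ^ 2) := by ring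
  unfold KK
  rw [e7]
  nlinarith

lemma low_pt {c δ : ℝ} (U : ℝ × Space → ℝ) (p : ℝ × Space) (ht : 0 < p.1 + δ)
    (h2 : ‖p.2‖ ≤ p.1 + δ) :
    (p.1 + δ) * Fpot c (U p) ≤
      QQ c δ U p + 1 / (2 * (p.1 + δ)) * (3 * U p ^ 2 + 2 * U p * ∑ i, p.2 i * pdi i U p) := by
  have hS := S_sq U p
  have hr := norm_nonneg p.2
  unfold QQ en
  generalize ∑ i, p.2 i * pdi i U p = S at *
  have hN : 0 ≤ ∑ i, (pdi i U p) ^ 2 := by positivity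
  generalize ∑ i, (pdi i U p) ^ 2 = N at *
  generalize pd0 U p = a at *
  generalize Fpot c (U p) = F at *
  generalize U p = v at *
  generalize p.1 + δ = τ at *
  generalize ‖p.2‖ = r at *
  have h3 : S ^ 2 ≤ τ ^ 2 * N := hS.trans (by gcongr)
  have h4 : τ * (τ * (1 / 2 * a ^ 2 + 1 / 2 * N + F) + a * S + v * a
      + 1 / (2 * τ) * (3 * v ^ 2 + 2 * v * S)) =
      τ ^ 2 * F + 1/2 * (τ ^ 2 * N - S ^ 2) + 1/2 * (τ * a + S + v) ^ 2 + v ^ 2 := by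
    field_simp; ring
  have h5 : τ * (τ * F) ≤ τ * (τ * (1 / 2 * a ^ 2 + 1 / 2 * N + F) + a * S + v * a
      + 1 / (2 * τ) * (3 * v ^ 2 + 2 * v * S)) := by
    rw [h4]; nlinarith [sq_nonneg (τ * a + S + v), sq_nonneg v]
  exact le_of_mul_le_mul_left h5 ht

lemma up_pt {c δ : ℝ} (hc : 0 < c) (U : ℝ × Space → ℝ) (p : ℝ × Space) (ht : 0 < p.1)
    (hδ : 0 < δ) (hδt : δ ≤ p.1) (h2 : ‖p.2‖ ≤ p.1 + δ) {h : ℝ} (hh : 0 < h) :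
    QQ c δ U p + 1 / (2 * p.1) * (3 * U p ^ 2 + 2 * U p * ∑ i, p.2 i * pdi i U p)
      ≤ (20 * p.1 + 120 * p.1 / (g c 0 * h ^ 2)) * en c U p + 5 * h / p.1 ^ 2 := by
  have hS := S_sq U p
  have hr := norm_nonneg p.2
  have hy := young6 (v := U p) ht hh
  have hF := U6_le hc (U p)
  have hg := g_pos c 0
  have hF0 := Fpot_nonneg hc (U p)
  unfold QQ en
  generalize ∑ i, p.2 i * pdi i U p = S at *
  have hN : 0 ≤ ∑ i, (pdi i U p) ^ 2 := by positivity
  generalize ∑ i, (pdi i U p) ^ 2 = N at *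
  generalize pd0 U p = a at *
  generalize Fpot c (U p) = F at *
  generalize U p = v at *
  generalize p.1 = t at *
  generalize ‖p.2‖ = r at *
  have h3 : S ^ 2 ≤ 4 * t ^ 2 * N := hS.trans (by
    have : r ^ 2 ≤ (2 * t) ^ 2 := by gcongr; linarith
    nlinarith)
  set e := 1 / 2 * a ^ 2 + 1 / 2 * N + F with he
  have he0 : 0 ≤ e := by positivity
  have k1 : (t + δ) * e ≤ 2 * t * e := by gcongr; linarith
  have k2 : a * S ≤ t * a ^ 2 + t * N := by
    have : t * (a * S) ≤ t * (t * a ^ 2 + t * N) := by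
      nlinarith [sq_nonneg (2 * t * a - S)]
    exact le_of_mul_le_mul_left this ht
  have k3 : v * a ≤ t * a ^ 2 + v ^ 2 / t := by
    have : t * (t * a ^ 2 + v ^ 2 / t - v * a) = t ^ 2 * a ^ 2 + v ^ 2 - t * v * a := by
      field_simp
    have h' : 0 ≤ t * (t * a ^ 2 + v ^ 2 / t - v * a) := by
      rw [this]; nlinarith [sq_nonneg (t * a - v), sq_nonneg (t * a), sq_nonneg v]
    have := nonneg_of_mul_nonneg_right h' ht
    linarith
  have k4 : 1 / (2 * t) * (3 * v ^ 2 + 2 * v * S) ≤ 4 * (v ^ 2 / t) + 4 * t * N := by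
    have : 1 / (2 * t) * (3 * v ^ 2 + 2 * v * S) * t = 3 / 2 * v ^ 2 + v * S := by
      field_simp
    have h'' : (4 * (v ^ 2 / t) + 4 * t * N) * t = 4 * v ^ 2 + 4 * t ^ 2 * N := by field_simp
    have h' : 1 / (2 * t) * (3 * v ^ 2 + 2 * v * S) * t ≤ (4 * (v ^ 2 / t) + 4 * t * N) * t := by
      rw [this, h'']; nlinarith [sq_nonneg (v - S), sq_nonneg v]
    exact le_of_mul_le_mul_right h' ht
  have k5 : t / h ^ 2 * v ^ 6 ≤ t / h ^ 2 * (6 / g c 0 * e) := by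
    have : v ^ 6 ≤ 6 / g c 0 * e := hF.trans (by gcongr; rw [he]; nlinarith [sq_nonneg a])
    gcongr
  have k6 : t / h ^ 2 * (6 / g c 0 * e) * 20 = 120 * t / (g c 0 * h ^ 2) * e := by
    field_simp; ring
  have k8 : 0 ≤ t / h ^ 2 * (6 / g c 0 * e) := by positivity
  have k7 : 5 * h / t ^ 2 = 5 * (h / t ^ 2) := by ring
  have k9 : t * a ^ 2 ≤ 2 * (t * e) := by
    have : a ^ 2 ≤ 2 * e := by rw [he]; linarith
    have := mul_le_mul_of_nonneg_left this ht.le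
    linarith
  have k10 : t * N ≤ 2 * (t * e) := by
    have : N ≤ 2 * e := by rw [he]; have := sq_nonneg a; linarith
    have := mul_le_mul_of_nonneg_left this ht.le
    linarith
  have k11 : 0 ≤ t * e := by positivity
  rw [k7, add_mul (20 * t), ← k6]
  linarith
lemma vol_ball {r : ℝ} (hr : 0 ≤ r) :
    (volume (Metric.closedBall (0 : Space) r)).toReal = Real.pi * 4 / 3 * r ^ 3 := by
  rw [EuclideanSpace.volume_closedBall_fin_three]
  rw [ENNReal.toReal_mul, ENNReal.toReal_pow, ENNReal.toReal_ofReal hr,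
    ENNReal.toReal_ofReal (by positivity)]
  ring

namespace Good

variable {c δ R : ℝ} {I : Set ℝ} {U : ℝ × Space → ℝ}

/-- Local smoothed energy. -/
def _root_.ew (c δ : ℝ) (U : ℝ × Space → ℝ) (t : ℝ) : ℝ :=
  ∫ x, rad (cut δ) (t, x) * en c U (t, x)

/-- Morawetz functional. -/
def _root_.YY (c δ : ℝ) (U : ℝ × Space → ℝ) (t : ℝ) : ℝ :=
  (∫ x, rad (cut δ) (t, x) * QQ c δ U (t, x)) + 1/2 * ∫ x, rad (cut1 δ) (t, x) * U (t, x) ^ 2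

lemma w_supp (G : Good c δ R I U) {t : ℝ} {x : Space} (h : t + δ < ‖x‖) :
    rad (cut δ) (t, x) = 0 := cut_zero G.hδ (by simp only; linarith)

lemma psi_supp (G : Good c δ R I U) {t : ℝ} {x : Space} (h : rad (cut1 δ) (t, x) ≠ 0) :
    t ≤ ‖x‖ ∧ ‖x‖ ≤ t + δ := by
  constructor
  · by_contra h'
    exact h (cut1_zero G.hδ (by simp only; linarith))
  · by_contra h'
    exact h (cut1_zero' G.hδ (by simp only; linarith))

lemma w_nonneg (p : ℝ × Space) : 0 ≤ rad (cut δ) p := cut_nonneg _ _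
lemma w_le_one (p : ℝ × Space) : rad (cut δ) p ≤ 1 := cut_le_one _ _
lemma psi_nonneg (G : Good c δ R I U) (p : ℝ × Space) : 0 ≤ rad (cut1 δ) p := cut1_nonneg G.hδ _

lemma wI (G : Good c δ R I U) {t : ℝ} (ht : t ∈ I) :
    Integrable (fun x : Space => rad (cut δ) (t, x)) := by
  simpa using G.wInt (h := fun _ => 1) continuousOn_const ht

lemma psiI (G : Good c δ R I U) {t : ℝ} (ht : t ∈ I) :
    Integrable (fun x : Space => rad (cut1 δ) (t, x)) := by
  simpa using G.psiInt (h := fun _ => 1) continuousOn_const ht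

lemma w_int (G : Good c δ R I U) {t : ℝ} (ht : t ∈ I) :
    ∫ x : Space, rad (cut δ) (t, x) ≤ Real.pi * 4 / 3 * (8 * t ^ 3) := by
  have htp := G.pos ht
  have hl := G.low t ht
  have hδ := G.hδ
  have h1 : ∫ x : Space, rad (cut δ) (t, x)
      ≤ ∫ x : Space, (Metric.closedBall (0 : Space) (2 * t)).indicator (fun _ => (1:ℝ)) x := by
    apply integral_mono (G.wI ht)
    · exact (integrable_indicator_iff Metric.isClosed_closedBall.measurableSet).2
        (integrableOn_const (measure_closedBall_lt_top.ne))
    · intro x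
      by_cases hx : x ∈ Metric.closedBall (0 : Space) (2 * t)
      · rw [indicator_of_mem hx]; exact w_le_one _
      · rw [indicator_of_notMem hx]
        have : 2 * t < ‖x‖ := by simpa using hx
        exact (G.w_supp (by linarith)).le
  refine h1.trans ?_
  rw [integral_indicator Metric.isClosed_closedBall.measurableSet, setIntegral_const]
  rw [Measure.real, vol_ball (by linarith)]
  simp only [smul_eq_mul, mul_one]
  apply le_of_eq; ring

lemma psi_int (G : Good c δ R I U) {t : ℝ} (ht : t ∈ I) :
    ∫ x : Space, rad (cut1 δ) (t, x) ≤ Real.pi * 4 / 3 * (24 * t ^ 2) := by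
  have htp := G.pos ht
  have hd := G.dil ht (h := fun _ => 1) contDiffOn_const
  have hz : ∀ i (p : ℝ × Space), pdi i (fun _ => (1:ℝ)) p = 0 := by
    intro i p; simp [pdi]
  simp only [hz, mul_zero, Finset.sum_const_zero, add_zero, mul_one] at hd
  rw [integral_mul_const] at hd
  have hw := G.w_int ht
  have h1 : ∫ x : Space, t * rad (cut1 δ) (t, x) ≤ ∫ x : Space, rad (cut1 δ) (t, x) * ‖x‖ := by
    apply integral_mono ((G.psiI ht).const_mul t)
      (G.psiInt (h := fun p => ‖p.2‖) (by fun_prop) ht)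
    intro x
    simp only
    by_cases h0 : rad (cut1 δ) (t, x) = 0
    · simp [h0]
    · have := (G.psi_supp h0).1
      have := mul_le_mul_of_nonneg_left this (G.psi_nonneg (t, x))
      linarith
  rw [integral_const_mul, hd] at h1
  have h2 : t * ∫ x : Space, rad (cut1 δ) (t, x) ≤ t * (Real.pi * 4 / 3 * (24 * t ^ 2)) := by
    refine h1.trans ?_
    nlinarith
  exact le_of_mul_le_mul_left h2 htp

lemma ew_mono (G : Good c δ R I U) (hc : 0 < c) {a T : ℝ} (haT : a ≤ T) (hI : Icc a T ⊆ I) :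
    ew c δ U a ≤ ew c δ U T := by
  have hm : MonotoneOn (ew c δ U) (Icc a T) := by
    apply monotoneOn_of_deriv_nonneg (convex_Icc a T)
    · exact fun s hs => (G.ew_deriv (hI hs)).2.continuousAt.continuousWithinAt
    · intro s hs; rw [interior_Icc] at hs
      exact (G.ew_deriv (hI (Ioo_subset_Icc_self hs))).2.differentiableAt.differentiableWithinAt
    · intro s hs; rw [interior_Icc] at hs
      have := (G.ew_deriv (hI (Ioo_subset_Icc_self hs))).2
      rw [show deriv (ew c δ U) s = _ from this.deriv]
      exact integral_nonneg fun x => mul_nonneg (G.psi_nonneg _) (qq_nonneg hc _ _)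
  exact hm (left_mem_Icc.2 haT) (right_mem_Icc.2 haT) haT

lemma Y_deriv (G : Good c δ R I U) (hc : 0 < c) {t T h : ℝ} (ht : t ∈ I) (htT : t ≤ T)
    (hh : 0 < h) :
    ∃ y, HasDerivAt (YY c δ U) y t ∧
      y ≤ KK c T h * (∫ x, rad (cut1 δ) (t, x) * qq c U (t, x))
        + Real.pi * 4 / 3 * 48 * h := by
  have h1 := G.Y1_deriv ht
  have h2 := G.Y2_deriv ht
  have h3 := G.ew_deriv ht
  have htp := G.pos ht
  have hl := G.low t ht
  refine ⟨_, h1.2.add (h2.2.const_mul (1/2)), ?_⟩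
  rw [← integral_const_mul, ← integral_add h1.1 (h2.1.const_mul _)]
  have h4 : ∫ x : Space, (KK c T h * (rad (cut1 δ) (t, x) * qq c U (t, x))
      + 2 * h / t ^ 2 * rad (cut1 δ) (t, x)) ≤ KK c T h * (∫ x, rad (cut1 δ) (t, x) * qq c U (t, x))
        + Real.pi * 4 / 3 * 48 * h := by
    rw [integral_add (h3.1.const_mul _) ((G.psiI ht).const_mul _), integral_const_mul,
      integral_const_mul]
    have := mul_le_mul_of_nonneg_left (G.psi_int ht) (by positivity : 0 ≤ 2 * h / t ^ 2)
    have e : 2 * h / t ^ 2 * (Real.pi * 4 / 3 * (24 * t ^ 2)) = Real.pi * 4 / 3 * 48 * h := by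
      field_simp; ring
    rw [e] at this
    linarith
  refine le_trans (integral_mono (h1.1.add (h2.1.const_mul _))
    ((h3.1.const_mul _).add ((G.psiI ht).const_mul _)) ?_) h4
  intro x
  simp only [Pi.add_apply]
  have hw := w_nonneg (δ := δ) (t, x)
  have hR := R_nonneg hc (U (t, x))
  have hwR := mul_nonneg hw hR
  by_cases h0 : rad (cut1 δ) (t, x) = 0
  · simp only [h0, mul_zero, zero_mul]; linarith
  · obtain ⟨hx1, hx2⟩ := G.psi_supp h0
    have hb := flux_bound (δ := δ) hc U (t, x) hh htp G.hδ hl.le htT hx1 hx2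
    have := mul_le_mul_of_nonneg_left hb (G.psi_nonneg (t, x))
    simp only at this
    linarith

lemma Y_diff (G : Good c δ R I U) (hc : 0 < c) {a T h : ℝ} (haT : a ≤ T) (hI : Icc a T ⊆ I)
    (hh : 0 < h) :
    YY c δ U T - YY c δ U a ≤ KK c T h * (ew c δ U T - ew c δ U a)
      + Real.pi * 4 / 3 * 48 * h * (T - a) := by
  have key : ∀ s ∈ Icc a T, ∃ z ≤ (0:ℝ), HasDerivAt (fun s => YY c δ U s - KK c T h * ew c δ U s
      - Real.pi * 4 / 3 * 48 * h * s) z s := by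
    intro s hs
    obtain ⟨y, hy, hle⟩ := G.Y_deriv hc (hI hs) hs.2 hh
    refine ⟨_, ?_, (hy.sub ((G.ew_deriv (hI hs)).2.const_mul (KK c T h))).sub
      ((hasDerivAt_id s).const_mul (Real.pi * 4 / 3 * 48 * h))⟩
    linarith
  have hm : AntitoneOn (fun s => YY c δ U s - KK c T h * ew c δ U s
      - Real.pi * 4 / 3 * 48 * h * s) (Icc a T) := by
    apply antitoneOn_of_deriv_nonpos (convex_Icc a T)
    · intro s hs
      obtain ⟨z, _, hz⟩ := key s hs
      exact hz.continuousAt.continuousWithinAt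
    · intro s hs; rw [interior_Icc] at hs
      obtain ⟨z, _, hz⟩ := key s (Ioo_subset_Icc_self hs)
      exact hz.differentiableAt.differentiableWithinAt
    · intro s hs; rw [interior_Icc] at hs
      obtain ⟨z, h0, hz⟩ := key s (Ioo_subset_Icc_self hs)
      rw [hz.deriv]; exact h0
  have := hm (left_mem_Icc.2 haT) (right_mem_Icc.2 haT) haT
  simp only at this
  linarith

lemma dilU (G : Good c δ R I U) {t : ℝ} (ht : t ∈ I) :
    ∫ x, rad (cut1 δ) (t, x) * (‖x‖ * U (t, x) ^ 2) =
      ∫ x, rad (cut δ) (t, x) * (3 * U (t, x) ^ 2 + 2 * U (t, x) * ∑ i, x i * pdi i U (t, x)) := by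
  rw [G.dil ht (G.U1.pow 2)]
  congr 1; funext x
  have h2 : ∀ i, pdi i (fun q => U q ^ 2) (t, x) = _ := fun i =>
    (LD_of (G.dd G.U1 ht) (0, EuclideanSpace.single i 1)).sq.eq (G.dd (G.U1.pow 2) ht)
  have h3 : ∑ i, x i * pdi i (fun q => U q ^ 2) (t, x) = 2 * U (t, x) * ∑ i, x i * pdi i U (t, x) := by
    rw [Finset.mul_sum]
    refine Finset.sum_congr rfl fun i _ => ?_
    rw [show pdi i (fun q => U q ^ 2) (t, x) = _ from h2 i]
    simp only [← pdi.eq_1]; ring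
  rw [h3]

lemma DC (G : Good c δ R I U) : ContinuousOn (fun p => 3 * U p ^ 2
    + 2 * U p * ∑ i, p.2 i * pdi i U p) (I ×ˢ univ) :=
  ((contDiffOn_const.mul (G.U1.pow 2)).add
    ((contDiffOn_const.mul G.U1).mul G.SC)).continuousOn

lemma Y_low (G : Good c δ R I U) (hc : 0 < c) {t : ℝ} (ht : t ∈ I) :
    t * ∫ x, rad (cut δ) (t, x) * Fpot c (U (t, x)) ≤ YY c δ U t := by
  have htp := G.pos ht
  have hδ := G.hδ
  have hFc : ContinuousOn (fun p => Fpot c (U p)) (I ×ˢ univ) :=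
    ((Fpot_contDiff c).comp_contDiffOn G.U1).continuousOn
  have iF := G.wInt hFc ht
  have iQ := G.wInt G.QQC.continuousOn ht
  have iD := G.wInt G.DC ht
  have iU := G.psiInt (G.U1.pow 2).continuousOn ht
  have iU2 := G.psiInt (h := fun p => ‖p.2‖ * U p ^ 2)
    ((by fun_prop : ContinuousOn (fun p : ℝ × Space => ‖p.2‖) (I ×ˢ univ)).mul
      (G.U1.pow 2).continuousOn) ht
  have h1 : ∫ x, 1 / (t + δ) * (rad (cut1 δ) (t, x) * (‖x‖ * U (t, x) ^ 2))
      ≤ ∫ x, rad (cut1 δ) (t, x) * U (t, x) ^ 2 := by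
    apply integral_mono (iU2.const_mul _) iU
    intro x
    simp only
    by_cases h0 : rad (cut1 δ) (t, x) = 0
    · simp [h0]
    · have h2 := (G.psi_supp h0).2
      have h3 : ‖x‖ * U (t, x) ^ 2 ≤ (t + δ) * U (t, x) ^ 2 := by gcongr
      have h4 := mul_le_mul_of_nonneg_left h3 (G.psi_nonneg (t, x))
      rw [one_div, inv_mul_le_iff₀ (by positivity)]
      simp only at *
      linarith
  rw [integral_const_mul, G.dilU ht] at h1
  have h2 : ∫ x, (t + δ) * (rad (cut δ) (t, x) * Fpot c (U (t, x))) ≤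
      ∫ x, (rad (cut δ) (t, x) * QQ c δ U (t, x) + 1 / (2 * (t + δ)) *
        (rad (cut δ) (t, x) * (3 * U (t, x) ^ 2 + 2 * U (t, x) * ∑ i, x i * pdi i U (t, x)))) := by
    apply integral_mono (iF.const_mul _) (iQ.add (iD.const_mul _))
    intro x
    simp only [Pi.add_apply]
    by_cases h0 : t + δ < ‖x‖
    · simp [G.w_supp h0]
    · have := low_pt (c := c) (δ := δ) U (t, x) (by simp only; positivity) (not_lt.1 h0)
      have := mul_le_mul_of_nonneg_left this (w_nonneg (δ := δ) (t, x))
      simp only at this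
      linarith
  rw [integral_const_mul, integral_add iQ (iD.const_mul _), integral_const_mul] at h2
  have h3 : 0 ≤ ∫ x, rad (cut δ) (t, x) * Fpot c (U (t, x)) :=
    integral_nonneg fun x => mul_nonneg (w_nonneg _) (Fpot_nonneg hc _)
  have h4 : 1 / (2 * (t + δ)) = 1/2 * (1 / (t + δ)) := by field_simp
  rw [h4] at h2
  unfold YY
  nlinarith

lemma Y_up (G : Good c δ R I U) (hc : 0 < c) {t h : ℝ} (ht : t ∈ I) (hh : 0 < h) :
    YY c δ U t ≤ (20 * t + 120 * t / (g c 0 * h ^ 2)) * ew c δ U t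
      + Real.pi * 4 / 3 * 40 * h * t := by
  have htp := G.pos ht
  have hδ := G.hδ
  have iQ := G.wInt G.QQC.continuousOn ht
  have iD := G.wInt G.DC ht
  have iE := G.wInt G.enC.continuousOn ht
  have iU := G.psiInt (G.U1.pow 2).continuousOn ht
  have iU2 := G.psiInt (h := fun p => ‖p.2‖ * U p ^ 2)
    ((by fun_prop : ContinuousOn (fun p : ℝ × Space => ‖p.2‖) (I ×ˢ univ)).mul
      (G.U1.pow 2).continuousOn) ht
  have h1 : ∫ x, rad (cut1 δ) (t, x) * U (t, x) ^ 2 ≤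
      ∫ x, 1 / t * (rad (cut1 δ) (t, x) * (‖x‖ * U (t, x) ^ 2)) := by
    apply integral_mono iU (iU2.const_mul _)
    intro x
    simp only
    by_cases h0 : rad (cut1 δ) (t, x) = 0
    · simp [h0]
    · have h2 := (G.psi_supp h0).1
      have h3 : t * U (t, x) ^ 2 ≤ ‖x‖ * U (t, x) ^ 2 := by gcongr
      have h4 := mul_le_mul_of_nonneg_left h3 (G.psi_nonneg (t, x))
      rw [one_div, le_inv_mul_iff₀ (by positivity)]
      simp only at *
      linarith
  rw [integral_const_mul, G.dilU ht] at h1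
  have h2 : ∫ x, (rad (cut δ) (t, x) * QQ c δ U (t, x) + 1 / (2 * t) *
        (rad (cut δ) (t, x) * (3 * U (t, x) ^ 2 + 2 * U (t, x) * ∑ i, x i * pdi i U (t, x)))) ≤
      ∫ x, ((20 * t + 120 * t / (g c 0 * h ^ 2)) * (rad (cut δ) (t, x) * en c U (t, x))
        + 5 * h / t ^ 2 * rad (cut δ) (t, x)) := by
    apply integral_mono (iQ.add (iD.const_mul _)) ((iE.const_mul _).add ((G.wI ht).const_mul _))
    intro x
    simp only [Pi.add_apply]
    by_cases h0 : t + δ < ‖x‖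
    · simp [G.w_supp h0]
    · have := up_pt (c := c) (δ := δ) hc U (t, x) htp hδ (G.low t ht).le (not_lt.1 h0) hh
      have := mul_le_mul_of_nonneg_left this (w_nonneg (δ := δ) (t, x))
      simp only at this
      linarith
  rw [integral_add iQ (iD.const_mul _), integral_const_mul,
    integral_add (iE.const_mul _) ((G.wI ht).const_mul _), integral_const_mul,
    integral_const_mul] at h2
  have h3 := mul_le_mul_of_nonneg_left (G.w_int ht) (by positivity : 0 ≤ 5 * h / t ^ 2)
  have e : 5 * h / t ^ 2 * (Real.pi * 4 / 3 * (8 * t ^ 3)) = Real.pi * 4 / 3 * 40 * h * t := by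
    field_simp; ring
  rw [e] at h3
  have h4 : 1 / (2 * t) = 1/2 * (1 / t) := by field_simp
  rw [h4] at h2
  unfold YY ew
  linarith

/-- Core estimate. -/
lemma core (G : Good c δ R I U) (hc : 0 < c) {a T h : ℝ} (haT : a ≤ T) (hI : Icc a T ⊆ I)
    (hh : 0 < h) :
    T * ∫ x, rad (cut δ) (T, x) * Fpot c (U (T, x)) ≤
      (20 * a + 120 * a / (g c 0 * h ^ 2)) * ew c δ U a + Real.pi * 4 / 3 * 40 * h * a
      + KK c T h * (ew c δ U T - ew c δ U a) + Real.pi * 4 / 3 * 48 * h * (T - a) := by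
  have h1 := G.Y_low hc (hI (right_mem_Icc.2 haT))
  have h2 := G.Y_up hc (hI (left_mem_Icc.2 haT)) hh
  have h3 := G.Y_diff hc haT hI hh
  linarith

end Good
lemma grad_sq (h : Space → ℝ) (x : Space) :
    ‖gradient h x‖ ^ 2 = ∑ i, (fderiv ℝ h x (EuclideanSpace.single i 1)) ^ 2 := by
  rw [EuclideanSpace.real_norm_sq_eq]
  refine Finset.sum_congr rfl fun i _ => ?_
  congr 1
  have h1 : inner ℝ (gradient h x) (EuclideanSpace.single i (1:ℝ)) =
      fderiv ℝ h x (EuclideanSpace.single i 1) := by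
    unfold gradient
    exact InnerProductSpace.toDual_symm_apply
  rw [← h1, EuclideanSpace.inner_single_right]
  simp

section
variable {c t₁ t₂ : ℝ} {u : ℝ → Space → ℝ}

lemma Good_of (h1 : 0 < t₁) (hs : IsClassicalSol c (Icc t₁ t₂) u) :
    Good c t₁ (t₂ + t₁) (Ioo t₁ t₂) (fun p => u p.1 p.2) := by
  have hsm : ContDiffOn ℝ (⊤ : ℕ∞) (fun p : ℝ × Space => u p.1 p.2) (Ioo t₁ t₂ ×ˢ univ) :=
    hs.smooth.mono (prod_mono Ioo_subset_Icc_self subset_rfl)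
  have hd : ∀ p : ℝ × Space, p.1 ∈ Ioo t₁ t₂ →
      DifferentiableAt ℝ (fun p : ℝ × Space => u p.1 p.2) p := fun p hp =>
    cd_diff isOpen_Ioo (by simp) hsm hp
  refine ⟨isOpen_Ioo, h1, fun t ht => ht.1, fun t ht => by linarith [ht.2], hsm, ?_⟩
  rintro ⟨t, x⟩ (ht : t ∈ Ioo t₁ t₂)
  have he := hs.eqn t (Ioo_subset_Icc_self ht) x
  have e1 : dt2 u t x = pd0 (pd0 fun p => u p.1 p.2) (t, x) := by
    unfold dt2
    have hev : (fun s => dt1 u s x) =ᶠ[nhds t] fun s => pd0 (fun p => u p.1 p.2) (s, x) := by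
      filter_upwards [isOpen_Ioo.mem_nhds ht] with s hs
      exact (slice_t (hd (s, x) hs)).deriv
    rw [hev.deriv_eq]
    exact (slice_t (cd_diff isOpen_Ioo (by simp) (smooth_dir isOpen_Ioo hsm (1, 0)) ht)).deriv
  have e2 : lap (u t) x = ∑ i, pdi i (pdi i fun p => u p.1 p.2) (t, x) := by
    unfold lap
    refine Finset.sum_congr rfl fun i _ => ?_
    have : (fun y => fderiv ℝ (u t) y (EuclideanSpace.single i 1))
        = fun y => pdi i (fun p => u p.1 p.2) (t, y) := by
      funext y
      exact slice_x_fderiv (hd (t, y) ht) i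
    rw [this]
    exact slice_x_fderiv (cd_diff isOpen_Ioo (by simp) (smooth_dir isOpen_Ioo hsm _) ht) i
  rw [← e1, ← e2]; exact he

lemma ew_le_of_supp (hc : 0 < c) (h1 : 0 < t₁) (hs : IsClassicalSol c (Icc t₁ t₂) u)
    {V : Set ℝ} (hV : IsOpen V) (hVI : V ⊆ Ioo t₁ t₂) {R : ℝ}
    (hsupp : ∀ s ∈ V, ∀ x : Space, R < ‖x‖ → u s x = 0) {t : ℝ} (ht : t ∈ V) :
    ew c t₁ (fun p => u p.1 p.2) t ≤ energy c u t := by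
  have G := Good_of h1 hs
  set U : ℝ × Space → ℝ := fun p => u p.1 p.2 with hU
  have hsub : V ×ˢ (univ : Set Space) ⊆ Ioo t₁ t₂ ×ˢ univ := prod_mono hVI subset_rfl
  have sU : ∀ p : ℝ × Space, p.1 ∈ V → R < ‖p.2‖ → U p = 0 := fun p hp hR => hsupp _ hp _ hR
  have sD := supp_deriv hV sU
  have F0 : Fpot c 0 = 0 := by simp [Fpot]
  have i1 : Integrable (fun x => pd0 U (t, x) ^ 2) :=
    slice_int (h := fun p => pd0 U p ^ 2) (I := V) (R := R)
      ((G.U01.pow 2).continuousOn.mono hsub) ht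
      (fun p hp hR => by simp [pd0, sD p hp hR])
  have i2 : Integrable (fun x => ∑ i, pdi i U (t, x) ^ 2) :=
    slice_int (h := fun p => ∑ i, pdi i U p ^ 2) (I := V) (R := R)
      ((ContDiffOn.sum fun i _ => (G.Ui1 i).pow 2).continuousOn.mono hsub) ht
      (fun p hp hR => by simp [pdi, sD p hp hR])
  have i3 : Integrable (fun x => Fpot c (U (t, x))) :=
    slice_int (h := fun p => Fpot c (U p)) (I := V) (R := R)
      (((Fpot_contDiff c).comp_contDiffOn G.U1).continuousOn.mono hsub) ht
      (fun p hp hR => by simp [sU p hp hR, F0])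
  have e : energy c u t = ∫ x, en c U (t, x) := by
    have i12 : Integrable (fun x => 1 / 2 * pd0 U (t, x) ^ 2 + 1 / 2 * ∑ i, pdi i U (t, x) ^ 2) :=
      (i1.const_mul _).add (i2.const_mul _)
    unfold energy en
    rw [integral_add i12 i3,
      integral_add (i1.const_mul _) (i2.const_mul _), integral_const_mul, integral_const_mul]
    congr 2
    · congr 2; funext x
      rw [show dt1 u t x = _ from (slice_t (G.dd G.U1 (p := (t, x)) (hVI ht))).deriv]
    · congr 2; funext x
      rw [grad_sq]
      refine Finset.sum_congr rfl fun i _ => ?_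
      rw [← slice_x_fderiv (G.dd G.U1 (p := (t, x)) (hVI ht)) i]
  rw [e]
  apply integral_mono (G.wInt G.enC.continuousOn (hVI ht))
  · exact ((i1.const_mul _).add (i2.const_mul _)).add i3
  · intro x
    have := mul_le_mul_of_nonneg_right (Good.w_le_one (δ := t₁) (t, x)) (en_nonneg hc U (t, x))
    simpa using this

lemma exists_small (hc : 0 < c) (h1 : 0 < t₁) (hs : IsClassicalSol c (Icc t₁ t₂) u) {E : ℝ}
    (hE : ∀ t ∈ Icc t₁ t₂, energy c u t = E) {a b : ℝ} (hab : a < b)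
    (hI : Icc a b ⊆ Ioo t₁ t₂) : ∃ t ∈ Ioo a b, ew c t₁ (fun p => u p.1 p.2) t ≤ E := by
  have G := Good_of h1 hs
  have hcont : ∀ x : Space, ContinuousOn (fun s => u s x) (Icc a b) := by
    intro x
    have := G.smooth.continuousOn
    exact this.comp (f := fun s : ℝ => (s, x)) (by fun_prop) (fun s hs => ⟨hI hs, mem_univ _⟩)
  let K : ℕ → Set ℝ := fun n =>
    (⋂ x : Space, ⋂ _ : (n : ℝ) < ‖x‖, (Icc a b ∩ (fun s => u s x) ⁻¹' {0})) ∪ (Ioo a b)ᶜ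
  have hK : ∀ n, IsClosed (K n) := fun n =>
    (isClosed_iInter fun x => isClosed_iInter fun _ =>
      (hcont x).preimage_isClosed_of_isClosed isClosed_Icc isClosed_singleton).union
      isOpen_Ioo.isClosed_compl
  have hcov : ⋃ n, K n = univ := by
    rw [eq_univ_iff_forall]
    intro s
    by_cases h : s ∈ Ioo a b
    · have hcs := hs.compactSpt s (Ioo_subset_Icc_self (hI (Ioo_subset_Icc_self h)))
      obtain ⟨r, hr⟩ := hcs.isCompact.isBounded.subset_closedBall (0 : Space)
      obtain ⟨n, hn⟩ := exists_nat_ge r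
      refine mem_iUnion.2 ⟨n, Or.inl ?_⟩
      simp only [mem_iInter]
      intro x hx
      refine ⟨Ioo_subset_Icc_self h, ?_⟩
      show u s x = 0
      by_contra h0
      have := hr (subset_tsupport _ h0)
      rw [mem_closedBall_zero_iff] at this
      linarith
    · exact mem_iUnion.2 ⟨0, Or.inr h⟩
  have hd := dense_iUnion_interior_of_closed hK hcov
  obtain ⟨t, ht, htK⟩ := hd.exists_mem_open isOpen_Ioo (nonempty_Ioo.2 hab)
  obtain ⟨n, hn⟩ := mem_iUnion.1 ht
  refine ⟨t, htK, ?_⟩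
  have hV : IsOpen (Ioo a b ∩ interior (K n)) := isOpen_Ioo.inter isOpen_interior
  have hVI : Ioo a b ∩ interior (K n) ⊆ Ioo t₁ t₂ :=
    fun s hs => hI (Ioo_subset_Icc_self hs.1)
  rw [← hE t (Ioo_subset_Icc_self (hVI ⟨htK, hn⟩))]
  refine ew_le_of_supp hc h1 hs hV hVI (R := n) ?_ ⟨htK, hn⟩
  rintro s ⟨hs1, hs2⟩ x hx
  rcases interior_subset hs2 with h | h
  · exact (mem_iInter₂.1 h x hx).2
  · exact absurd hs1 h

lemma ew_le (hc : 0 < c) (h1 : 0 < t₁) (hs : IsClassicalSol c (Icc t₁ t₂) u) {E : ℝ}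
    (hE : ∀ t ∈ Icc t₁ t₂, energy c u t = E) {t : ℝ} (ht : t ∈ Ioo t₁ t₂) :
    ew c t₁ (fun p => u p.1 p.2) t ≤ E := by
  have G := Good_of h1 hs
  by_contra hlt
  rw [not_le] at hlt
  have hca : ContinuousAt (ew c t₁ fun p => u p.1 p.2) t := (G.ew_deriv ht).2.continuousAt
  have hev := (hca.eventually (lt_mem_nhds hlt)).and (isOpen_Ioo.mem_nhds ht)
  obtain ⟨ε, hε, hb⟩ := Metric.eventually_nhds_iff_ball.1 hev
  have hsub : Icc t (t + ε / 2) ⊆ Metric.ball t ε := by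
    intro s hs
    rw [Metric.mem_ball, Real.dist_eq, abs_lt]
    constructor <;> linarith [hs.1, hs.2]
  obtain ⟨s, hs1, hs2⟩ := exists_small hc h1 hs hE (a := t) (b := t + ε / 2) (by linarith)
    (fun s hs => (hb s (hsub hs)).2)
  exact absurd (hb s (hsub (Ioo_subset_Icc_self hs1))).1 (not_lt.2 hs2)

end
/-- Final constant. -/
def BB (c : ℝ) : ℝ := 6 / g c 0 * (28 + 132 / g c 0 + Real.pi * 4 / 3 * 88)

lemma BB_pos (c : ℝ) : 0 < BB c := by
  have := g_pos c 0
  have := Real.pi_pos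
  unfold BB; positivity

lemma cone_le {B η t : ℝ} (hB : 0 < B) (hη : 0 < η) {h : Space → ℝ}
    (hle : ∫ x in Metric.ball (0:Space) t, |h x| ^ (6:ℝ) ≤ B * η ^ 6) :
    LxConeNorm 6 t h ≤ B ^ ((1:ℝ)/6) * η := by
  unfold LxConeNorm
  have h0 : 0 ≤ ∫ x in Metric.ball (0:Space) t, |h x| ^ (6:ℝ) :=
    integral_nonneg fun x => by positivity
  refine (Real.rpow_le_rpow h0 hle (by norm_num)).trans (le_of_eq ?_)
  rw [Real.mul_rpow hB.le (by positivity)]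
  congr 1
  rw [← Real.rpow_natCast, ← Real.rpow_mul hη.le]
  norm_num

lemma abs_rpow6 (v : ℝ) : |v| ^ (6:ℝ) = v ^ 6 := by
  have : |v| ^ (6:ℝ) = |v| ^ 6 := by exact_mod_cast Real.rpow_natCast |v| 6
  rw [this, Even.pow_abs (by decide)]

section
variable {c t₁ t₂ : ℝ} {u : ℝ → Space → ℝ}

lemma cone_int (hc : 0 < c) (h1 : 0 < t₁) (hs : IsClassicalSol c (Icc t₁ t₂) u) {T : ℝ}
    (hT : T ∈ Ioo t₁ t₂) :
    ∫ x in Metric.ball (0:Space) T, |u T x| ^ (6:ℝ) ≤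
      6 / g c 0 * ∫ x, rad (cut t₁) (T, x) * Fpot c (u T x) := by
  have G := Good_of h1 hs
  have hFc : ContinuousOn (fun p : ℝ × Space => Fpot c (u p.1 p.2)) (Ioo t₁ t₂ ×ˢ univ) :=
    ((Fpot_contDiff c).comp_contDiffOn G.U1).continuousOn
  have hg := g_pos c 0
  have iF := G.wInt hFc hT
  rw [← integral_indicator Metric.isOpen_ball.measurableSet, ← integral_const_mul]
  apply integral_mono_of_nonneg
  · exact Filter.Eventually.of_forall fun x => indicator_nonneg (fun x _ => by positivity) x
  · exact iF.const_mul _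
  · refine Filter.Eventually.of_forall fun x => ?_
    have hF := Fpot_nonneg hc (u T x)
    have hw := Good.w_nonneg (δ := t₁) (T, x)
    simp only
    by_cases hx : x ∈ Metric.ball (0:Space) T
    · rw [indicator_of_mem hx, abs_rpow6]
      have : rad (cut t₁) (T, x) = 1 := cut_one h1 (by
        rw [mem_ball_zero_iff] at hx; simp only; linarith)
      rw [this, one_mul]; exact U6_le hc _
    · rw [indicator_of_notMem hx]; positivity

lemma cone_int0 (hc : 0 < c) (hs : IsClassicalSol c (Icc t₁ t₂) u) {T : ℝ}
    (hT : T ∈ Icc t₁ t₂) :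
    ∫ x in Metric.ball (0:Space) T, |u T x| ^ (6:ℝ) ≤ 6 / g c 0 * energy c u T := by
  have hg := g_pos c 0
  have hcont : Continuous (u T) := slice_cont (h := fun p => u p.1 p.2) hs.smooth.continuousOn hT
  have iF : Integrable (fun x => Fpot c (u T x)) := by
    apply ((Fpot_contDiff c).continuous.comp hcont).integrable_of_hasCompactSupport
    exact (hs.compactSpt T hT).comp_left (by simp [Fpot])
  have hle : ∫ x in Metric.ball (0:Space) T, |u T x| ^ (6:ℝ) ≤
      6 / g c 0 * ∫ x, Fpot c (u T x) := by
    rw [← integral_indicator Metric.isOpen_ball.measurableSet, ← integral_const_mul]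
    apply integral_mono_of_nonneg
    · exact Filter.Eventually.of_forall fun x => indicator_nonneg (fun x _ => by positivity) x
    · exact iF.const_mul _
    · refine Filter.Eventually.of_forall fun x => ?_
      have hF := Fpot_nonneg hc (u T x)
      simp only
      by_cases hx : x ∈ Metric.ball (0:Space) T
      · rw [indicator_of_mem hx, abs_rpow6]; exact U6_le hc _
      · rw [indicator_of_notMem hx]; positivity
  refine hle.trans ?_
  gcongr
  unfold energy
  have a1 : 0 ≤ ∫ x : Space, (dt1 u T x) ^ 2 := integral_nonneg fun x => by positivity
  have a2 : 0 ≤ ∫ x : Space, ‖gradient (u T) x‖ ^ 2 := integral_nonneg fun x => by positivity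
  linarith

lemma energy_nonneg (hc : 0 < c) (T : ℝ) : 0 ≤ energy c u T := by
  unfold energy
  have a1 : 0 ≤ ∫ x : Space, (dt1 u T x) ^ 2 := integral_nonneg fun x => by positivity
  have a2 : 0 ≤ ∫ x : Space, ‖gradient (u T) x‖ ^ 2 := integral_nonneg fun x => by positivity
  have a3 : 0 ≤ ∫ x : Space, Fpot c (u T x) := integral_nonneg fun x => Fpot_nonneg hc _
  linarith

lemma final_T (hc : 0 < c) (h1 : 0 < t₁) (hs : IsClassicalSol c (Icc t₁ t₂) u) {E A η : ℝ}
    (hE : ∀ t ∈ Icc t₁ t₂, energy c u t = E) (hη : 0 < η) (hη1 : η ≤ 1) (hA : 1 ≤ A)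
    (hEA : E = A * η ^ 18) {a T : ℝ} (ha : a ∈ Ioo t₁ t₂) (hT : T ∈ Ioo t₁ t₂)
    (haT : a * A ≤ T)
    (hdiff : ew c t₁ (fun p => u p.1 p.2) T - ew c t₁ (fun p => u p.1 p.2) a ≤ η ^ 18) :
    LxConeNorm 6 T (u T) ≤ BB c ^ ((1:ℝ)/6) * η := by
  have G := Good_of h1 hs
  have hg := g_pos c 0
  have ha0 : 0 < a := h1.trans ha.1
  have hT0 : 0 < T := h1.trans hT.1
  have haT' : a ≤ T := le_trans (by nlinarith) haT
  have hI : Icc a T ⊆ Ioo t₁ t₂ := fun s hs => ⟨ha.1.trans_le hs.1, hs.2.trans_lt hT.2⟩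
  have hcore := G.core hc haT' hI (h := η ^ 6) (by positivity)
  have hew := ew_le hc h1 hs hE ha
  have hint := cone_int hc h1 hs hT
  apply cone_le (BB_pos c) hη
  refine hint.trans ?_
  unfold BB
  rw [mul_assoc]
  gcongr
  simp only at hcore
  set X := ∫ x, rad (cut t₁) (T, x) * Fpot c (u T x)
  set e1 := ew c t₁ (fun p => u p.1 p.2) a
  set e2 := ew c t₁ (fun p => u p.1 p.2) T
  have hη18 : η ^ 18 ≤ η ^ 6 := pow_le_pow_of_le_one hη.le hη1 (by norm_num)
  have k1 : (20 * a + 120 * a / (g c 0 * (η ^ 6) ^ 2)) * e1 ≤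
      20 * T * η ^ 6 + 120 / g c 0 * T * η ^ 6 := by
    have : (20 * a + 120 * a / (g c 0 * (η ^ 6) ^ 2)) * e1 ≤
        (20 * a + 120 * a / (g c 0 * (η ^ 6) ^ 2)) * (A * η ^ 18) := by
      rw [← hEA]; gcongr
    refine this.trans ?_
    have e : (20 * a + 120 * a / (g c 0 * (η ^ 6) ^ 2)) * (A * η ^ 18)
      = 20 * (a * A) * η ^ 18 + 120 / g c 0 * (a * A) * η ^ 6 := by field_simp
    rw [e]
    gcongr
  have k2 : KK c T (η ^ 6) * (e2 - e1) ≤ 8 * T * η ^ 6 + 12 / g c 0 * T * η ^ 6 := by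
    have : KK c T (η ^ 6) * (e2 - e1) ≤ KK c T (η ^ 6) * η ^ 18 := by
      unfold KK; gcongr
    refine this.trans ?_
    have e : KK c T (η ^ 6) * η ^ 18 = 8 * T * η ^ 18 + 12 / g c 0 * T * η ^ 6 := by
      unfold KK; field_simp
    rw [e]
    gcongr
  have hpi := Real.pi_pos
  have k3 : Real.pi * 4 / 3 * 40 * η ^ 6 * a ≤ Real.pi * 4 / 3 * 40 * η ^ 6 * T := by gcongr
  have k4 : Real.pi * 4 / 3 * 48 * η ^ 6 * (T - a) ≤ Real.pi * 4 / 3 * 48 * η ^ 6 * T := by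
    gcongr; linarith
  have k5 : T * X ≤ T * ((28 + 132 / g c 0 + Real.pi * 4 / 3 * 88) * η ^ 6) := by
    refine (hcore.trans (add_le_add (add_le_add (add_le_add k1 k3) k2) k4)).trans (le_of_eq ?_)
    field_simp; ring
  exact le_of_mul_le_mul_left k5 hT0

lemma main_gt (hc : 0 < c) (h1 : 0 < t₁) (hs : IsClassicalSol c (Icc t₁ t₂) u) {E A η : ℝ}
    (hE : ∀ t ∈ Icc t₁ t₂, energy c u t = E) (hη : 0 < η) (hη1 : η ≤ 1) (hA : 1 < A)
    (hEA : E = A * η ^ 18) (ht2 : t₁ * A ^ (4 * A) ≤ t₂) :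
    ∃ a, t₁ < a * A ∧ a * A ^ 2 < t₂ ∧ 0 < a ∧ ∀ T ∈ Icc (a * A) (a * A ^ 2),
      LxConeNorm 6 T (u T) ≤ BB c ^ ((1:ℝ)/6) * η := by
  have G := Good_of h1 hs
  have hA0 : 0 < A := by linarith
  set N := ⌈A⌉₊ with hN
  have hN1 : A ≤ N := Nat.le_ceil A
  have hN2 : (N : ℝ) < A + 1 := Nat.ceil_lt_add_one hA0.le
  have hN0 : (0:ℝ) < N := by linarith
  let al : ℕ → ℝ := fun j => t₁ * A ^ (2 * A - N + 2 * (j : ℝ))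
  have hal : ∀ j ≤ N, al j ∈ Ioo t₁ t₂ := by
    intro j hj
    have hj' : (j : ℝ) ≤ N := by exact_mod_cast hj
    have hj0 : (0 : ℝ) ≤ j := by positivity
    constructor
    · have : 1 < A ^ (2 * A - N + 2 * (j : ℝ)) := Real.one_lt_rpow hA (by linarith)
      simp only [al]; nlinarith
    · refine lt_of_lt_of_le ?_ ht2
      simp only [al]
      have := Real.rpow_lt_rpow_of_exponent_lt hA
        (by linarith : 2 * A - N + 2 * (j : ℝ) < 4 * A)
      nlinarith
  have hstep : ∀ j, al (j + 1) = al j * A ^ 2 := by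
    intro j
    simp only [al]
    rw [mul_assoc]
    congr 1
    rw [← Real.rpow_natCast A 2, ← Real.rpow_add hA0]
    congr 1
    push_cast; ring
  let e := ew c t₁ (fun p => u p.1 p.2)
  have hsum : ∑ j ∈ Finset.range N, (e (al (j + 1)) - e (al j)) ≤
      ∑ j ∈ Finset.range N, E / N := by
    rw [Finset.sum_range_sub (fun j => e (al j)), Finset.sum_const, Finset.card_range,
      nsmul_eq_mul, mul_div_cancel₀ _ hN0.ne']
    have h2 := ew_le hc h1 hs hE (hal N le_rfl)
    have h3 : 0 ≤ e (al 0) := integral_nonneg fun x =>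
      mul_nonneg (Good.w_nonneg _) (en_nonneg hc _ _)
    simp only [e] at *
    linarith
  obtain ⟨j, hj, hjle⟩ := Finset.exists_le_of_sum_le
    (Finset.nonempty_range_iff.2 (by intro h; rw [h] at hN0; simp at hN0)) hsum
  rw [Finset.mem_range] at hj
  have m1 := hal j hj.le
  have m2 := hal (j + 1) hj
  rw [hstep] at m2
  have ha0 : 0 < al j := h1.trans m1.1
  have haA : al j < al j * A := by nlinarith
  refine ⟨al j, m1.1.trans haA, m2.2, ha0, ?_⟩
  intro T hT
  have hTI : T ∈ Ioo t₁ t₂ := ⟨(m1.1.trans haA).trans_le hT.1, hT.2.trans_lt m2.2⟩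
  refine final_T hc h1 hs hE hη hη1 hA.le hEA m1 hTI hT.1 ?_
  have hmono : e T ≤ e (al (j + 1)) := by
    rw [hstep]
    exact G.ew_mono hc hT.2 fun s hs => ⟨hTI.1.trans_le hs.1, hs.2.trans_lt m2.2⟩
  have hEN : E / N ≤ η ^ 18 := by
    rw [div_le_iff₀ hN0, hEA, mul_comm]
    gcongr
  simp only [e] at *
  linarith

end

/-- Smallness of the potential on a dyadically long cone truncation. -/
theorem potential_small_on_cone (c : ℝ) (hc : 0 < c) (hc' : c < 8 / 225) :
    ∃ C > (0:ℝ),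
      ∀ (t₁ t₂ : ℝ) (u : ℝ → Space → ℝ) (E M η : ℝ),
        0 < t₁ → t₁ ≤ t₂ →
        IsClassicalSol c (Set.Icc t₁ t₂) u →
        (∀ t ∈ Set.Icc t₁ t₂, energy c u t = E) →
        (∀ t ∈ Set.Icc t₁ t₂, H2tildeNorm (u t) ≤ M) →
        0 < η → η ≤ min 1 (E ^ ((1:ℝ)/18)) →
        Set.Icc t₁ (t₁ * (E * η ^ (-(18:ℝ))) ^ (4 * E * η ^ (-(18:ℝ)))) ⊆ Set.Icc t₁ t₂ →
        ∃ t₁' t₂' : ℝ, 0 < t₁' ∧ Set.Icc t₁' t₂' ⊆ Set.Icc t₁ t₂ ∧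
          t₂' / t₁' = E * η ^ (-(18:ℝ)) ∧
          (⨆ t ∈ Set.Icc t₁' t₂', LxConeNorm 6 t (u t)) ≤ C * η := by
  have hBp := BB_pos c
  refine ⟨BB c ^ ((1:ℝ)/6), by positivity, ?_⟩
  intro t₁ t₂ u E M η h1 h12 hs hE _ hη hηm hsub
  have hη1 : η ≤ 1 := hηm.trans (min_le_left _ _)
  have hηE : η ≤ E ^ ((1:ℝ)/18) := hηm.trans (min_le_right _ _)
  have hE0 : 0 ≤ E := by
    rw [← hE t₁ (left_mem_Icc.2 h12)]; exact energy_nonneg hc t₁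
  have hE18 : η ^ 18 ≤ E := by
    have := pow_le_pow_left₀ hη.le hηE 18
    rwa [← Real.rpow_natCast (E ^ ((1:ℝ)/18)), ← Real.rpow_mul hE0,
      show (1:ℝ)/18 * ((18:ℕ):ℝ) = 1 by norm_num, Real.rpow_one] at this
  have hpow : η ^ (-(18:ℝ)) = (η ^ 18)⁻¹ := by
    rw [Real.rpow_neg hη.le]
    congr 1
    exact_mod_cast Real.rpow_natCast η 18
  rw [mul_assoc 4] at hsub
  have hη18 : 0 < η ^ 18 := by positivity
  generalize hAdef : E * η ^ (-(18:ℝ)) = A at *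
  rw [hpow] at hAdef
  have hEA : E = A * η ^ 18 := by rw [← hAdef]; field_simp
  have hA1 : 1 ≤ A := by
    rw [← hAdef, ← div_eq_mul_inv, le_div_iff₀ hη18]; linarith
  have hsup : ∀ s : Set ℝ, (∀ t ∈ s, LxConeNorm 6 t (u t) ≤ BB c ^ ((1:ℝ)/6) * η) →
      (⨆ t ∈ s, LxConeNorm 6 t (u t)) ≤ BB c ^ ((1:ℝ)/6) * η := fun s h =>
    Real.iSup_le (fun t => Real.iSup_le (fun ht => h t ht) (by positivity)) (by positivity)
  rcases hA1.eq_or_lt with hA | hA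
  · refine ⟨t₁, t₁, h1, ?_, ?_, hsup _ ?_⟩
    · exact Icc_subset_Icc le_rfl h12
    · rw [← hA]; field_simp
    · intro t ht
      rw [Icc_self, mem_singleton_iff] at ht
      subst ht
      have hm : t ∈ Icc t t₂ := left_mem_Icc.2 h12
      apply cone_le hBp hη
      refine (cone_int0 hc hs hm).trans ?_
      rw [hE t hm, hEA, ← hA, one_mul]
      have hg := g_pos c 0
      have hpi := Real.pi_pos
      unfold BB
      rw [mul_assoc]
      gcongr
      have h18 : η ^ 18 ≤ η ^ 6 := pow_le_pow_of_le_one hη.le hη1 (by norm_num)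
      have : 0 ≤ (27 + 132 / g c 0 + Real.pi * 4 / 3 * 88) * η ^ 6 := by positivity
      linarith
  · have ht2 : t₁ * A ^ (4 * A) ≤ t₂ := by
      have : 1 ≤ A ^ (4 * A) := Real.one_le_rpow hA1 (by linarith)
      exact (hsub (right_mem_Icc.2 (by nlinarith))).2
    obtain ⟨a, ha1, ha2, ha0, hb⟩ := main_gt hc h1 hs hE hη hη1 hA hEA ht2
    refine ⟨a * A, a * A ^ 2, by positivity, Icc_subset_Icc ha1.le ha2.le, ?_, hsup _ hb⟩
    field_simp
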